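/- Let m be a non-negative integer and let x > 0 be real with x not an integer. Then ∑_{n=1}^∞ σ_{2m+1/2}(n) n^{−1/2} e^{−2π√(2nx)} cos(2π√(2nx)) = ζ(1/2−2m)/(2π√(2x)) + π√(2x)·ζ(−1/2−2m) + ζ(1/2)·ζ(−2m) + ((−1)^m/(π√x·(2π)^{2m+1/2}))·Γ(2m+1/2) ∑_{n=1}^∞ σ_{2m+1/2}(n) n^{−2m−1/2} · W_m(n,x), where W_m(n,x) denotes the convergent series ₃F₂(1/4, 3/4, 1; 1/4−m, 3/4−m; −n²/x²) when n < x, and denotes its analytic continuation 1 − ₃F₂(1/4+m, 3/4+m, 1; 1/4, 3/4; −x²/n²) (a convergent series since x < n) when n > x. -/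

import Mathlib

open Complex Finset
open scoped Real BigOperators Classical

/-- Generalized divisor sum `σ_r(n) = ∑_{d ∣ n} d^r` with real exponent. -/
noncomputable def rsigma (r : ℝ) (n : ℕ) : ℝ := ∑ d ∈ n.divisors, (d : ℝ) ^ r

/-- Rising factorial `(a)_k`. -/
noncomputable def poch (a : ℂ) (k : ℕ) : ℂ := ∏ i ∈ Finset.range k, (a + i)

/-- Generalized hypergeometric series `₃F₂`. -/
noncomputable def F32 (a₁ a₂ a₃ b₁ b₂ z : ℂ) : ℂ :=
  ∑' k : ℕ, poch a₁ k * poch a₂ k * poch a₃ k /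
    (poch b₁ k * poch b₂ k * (k.factorial : ℂ)) * z ^ k

/-- `W_m(n,x)`: the series `₃F₂(1/4,3/4,1;1/4−m,3/4−m;−n²/x²)` for `n < x`, and its
analytic continuation `1 − ₃F₂(1/4+m,3/4+m,1;1/4,3/4;−x²/n²)` for `n > x`. -/
noncomputable def Wm (m : ℕ) (n : ℕ) (x : ℝ) : ℂ :=
  if (n : ℝ) < x then
    F32 (1 / 4) (3 / 4) 1 (1 / 4 - (m : ℂ)) (3 / 4 - (m : ℂ)) (-(n : ℂ) ^ 2 / (x : ℂ) ^ 2)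
  else
    1 - F32 (1 / 4 + (m : ℂ)) (3 / 4 + (m : ℂ)) 1 (1 / 4) (3 / 4) (-(x : ℂ) ^ 2 / (n : ℂ) ^ 2)

/-!
Write the left side as a double sum over `n = ab`. For fixed `b`, the sum over `a` of
`a^{2m} e^{-θ} cos θ` is by Poisson summation a multiple of the sum over `k ≥ 1` of the `2m`-th
derivatives at `k` of the Lévy kernel `h(t) = t^{-3/2} e^{-A/t}`, `A = 2πbx`, because the Fourier
transform of `h(|t|)` is an elementary function of this shape. Summing the geometric series in `b`
turns `h` into `t^{-3/2} / (e^{2πx/t} - 1)`, whose expansion in partial fractions consists of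
`t^{-1/2} / (2πx) - t^{-3/2} / 2` and the kernels `t^{-1/2} (x/π) / (x² + j² t²)`, `j ≥ 1`. Expanded
in powers of `jk/x` or of `x/(jk)`, the `2m`-th derivatives of the latter at `t = k` give `W_m`, and
those of the two powers give multiples of `ζ(2m + 1/2)` and `ζ(2m + 3/2)`, which the functional
equation moves to `ζ(1/2 - 2m)` and `ζ(-1/2 - 2m)`.

For `m = 0` the zero frequency in Poisson summation contributes `-b^{-1/2} / 2`, whose sum over `b`
diverges, and so does the sum of `t^{-1/2}` over `t = k`. The partial sums over `b ≤ N` replace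
`t^{-1/2}` by the smoothly truncated `t^{-1/2} (1 - e^{-M/t})`, `M = 2πNx`; both divergences are of
order `√N` and cancel, and each leaves a multiple of `ζ(1/2)`.
-/

namespace Coalescence

open Filter Topology MeasureTheory

/-! ### The zeta function on the half-plane `0 < re s` -/

lemma norm_cpow_sub_cpow_le {s : ℂ} (hs : 0 < s.re) {a t : ℝ} (ha : 0 < a)
    (ht : t ∈ Set.Icc a (a + 1)) :
    ‖(t : ℂ) ^ (-s) - (a : ℂ) ^ (-s)‖ ≤ ‖s‖ * a ^ (-s.re - 1) := by
  have hderiv : ∀ u ∈ Set.Icc a (a + 1), HasDerivWithinAt (fun u : ℝ ↦ (u : ℂ) ^ (-s))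
      (-s * (u : ℂ) ^ (-s - 1)) (Set.Icc a (a + 1)) u := fun u hu ↦
    (hasDerivAt_ofReal_cpow_const (ha.trans_le hu.1).ne'
      (neg_ne_zero.2 fun h ↦ by simp [h] at hs)).hasDerivWithinAt
  have hbound : ∀ u ∈ Set.Icc a (a + 1),
      ‖-s * (u : ℂ) ^ (-s - 1)‖ ≤ ‖s‖ * a ^ (-s.re - 1) := fun u hu ↦ by
    rw [norm_mul, norm_neg, norm_cpow_eq_rpow_re_of_pos (ha.trans_le hu.1)]
    simp only [sub_re, neg_re, one_re]
    exact mul_le_mul_of_nonneg_left (Real.rpow_le_rpow_of_nonpos ha hu.1 (by linarith))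
      (norm_nonneg _)
  refine ((convex_Icc _ _).norm_image_sub_le_of_norm_hasDerivWithin_le hderiv hbound
    (Set.left_mem_Icc.2 (by linarith)) ht).trans (mul_le_of_le_one_right (by positivity) ?_)
  rw [Real.norm_eq_abs, abs_le]
  constructor <;> linarith [ht.1, ht.2]

/-- `(s - 1) (a⁻ˢ - ∫ₐᵃ⁺¹ t⁻ˢ dt)`, the error of the left endpoint rule for `t⁻ˢ` on `[a, a + 1]`
multiplied by `s - 1`, so that it is entire in `s`. -/
noncomputable def endpointError (s : ℂ) (a : ℝ) : ℂ :=
  (s - 1) * (a : ℂ) ^ (-s) + ((a + 1 : ℝ) : ℂ) ^ (1 - s) - (a : ℂ) ^ (1 - s)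

lemma norm_endpointError_le {s : ℂ} (hs : 0 < s.re) {a : ℝ} (ha : 0 < a) :
    ‖endpointError s a‖ ≤ ‖1 - s‖ * (‖s‖ * a ^ (-s.re - 1)) := by
  rcases eq_or_ne s 1 with rfl | hs1
  · simp [endpointError]
  have hderiv : ∀ u ∈ Set.Icc a (a + 1), HasDerivWithinAt
      (fun u : ℝ ↦ (u : ℂ) ^ (1 - s) + (s - 1) * (a : ℂ) ^ (-s) * u)
      ((1 - s) * ((u : ℂ) ^ (-s) - (a : ℂ) ^ (-s))) (Set.Icc a (a + 1)) u := fun u hu ↦ by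
    have hpow := hasDerivAt_ofReal_cpow_const (ha.trans_le hu.1).ne' (sub_ne_zero.2 hs1.symm)
    have hlin := (hasDerivAt_id (u : ℂ)).comp_ofReal.const_mul ((s - 1) * (a : ℂ) ^ (-s))
    refine ((hpow.add hlin).congr_deriv ?_).hasDerivWithinAt
    rw [show 1 - s - 1 = -s by ring]
    ring
  have hbound : ∀ u ∈ Set.Icc a (a + 1), ‖(1 - s) * ((u : ℂ) ^ (-s) - (a : ℂ) ^ (-s))‖ ≤
      ‖1 - s‖ * (‖s‖ * a ^ (-s.re - 1)) := fun u hu ↦ by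
    rw [norm_mul]
    gcongr
    exact norm_cpow_sub_cpow_le hs ha hu
  have h := (convex_Icc _ _).norm_image_sub_le_of_norm_hasDerivWithin_le hderiv hbound
    (Set.left_mem_Icc.2 (by linarith)) (Set.right_mem_Icc.2 (by linarith : a ≤ a + 1))
  rw [add_sub_cancel_left, norm_one, mul_one] at h
  refine (congrArg norm ?_).trans_le h
  simp only [endpointError]
  push_cast
  ring

lemma summable_nat_add_one_rpow {r : ℝ} (hr : r < -1) :
    Summable fun k : ℕ ↦ ((k : ℝ) + 1) ^ r := by
  simpa using (summable_nat_add_iff 1).2 (Real.summable_nat_rpow.2 hr)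

lemma summable_endpointError {s : ℂ} (hs : 0 < s.re) :
    Summable fun k : ℕ ↦ endpointError s (k + 1) :=
  .of_norm_bounded (((summable_nat_add_one_rpow (by linarith)).mul_left ‖s‖).mul_left ‖1 - s‖)
    fun _ ↦ norm_endpointError_le hs (by positivity)

lemma sum_range_endpointError (s : ℂ) (N : ℕ) :
    ∑ k ∈ range N, endpointError s (k + 1) =
      (s - 1) * ∑ k ∈ range N, ((k : ℂ) + 1) ^ (-s) + ((N : ℂ) + 1) ^ (1 - s) - 1 := by
  induction N with
  | zero => simp
  | succ N ih =>
    rw [sum_range_succ, sum_range_succ, ih, endpointError]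
    push_cast
    ring

lemma tendsto_nat_add_one_cpow_neg {s : ℂ} (hs : 0 < s.re) :
    Tendsto (fun k : ℕ ↦ ((k : ℂ) + 1) ^ (-s)) atTop (𝓝 0) := by
  rw [tendsto_zero_iff_norm_tendsto_zero]
  refine ((tendsto_rpow_neg_atTop hs).comp
    (tendsto_natCast_atTop_atTop.comp (tendsto_add_atTop_nat 1))).congr fun k ↦ ?_
  have h := norm_cpow_eq_rpow_re_of_pos (x := (k : ℝ) + 1) (by positivity) (-s)
  push_cast at h
  simp [h]

lemma hasSum_nat_add_one_cpow_neg {s : ℂ} (hs : 1 < s.re) :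
    HasSum (fun k : ℕ ↦ ((k : ℂ) + 1) ^ (-s)) (riemannZeta s) := by
  rw [zeta_eq_tsum_one_div_nat_add_one_cpow hs]
  simp_rw [one_div, ← cpow_neg]
  exact Summable.hasSum (by simpa [cpow_neg] using
    (summable_nat_add_iff 1).2 ((summable_one_div_nat_cpow (p := s)).2 hs))

lemma tsum_endpointError_of_one_lt_re {s : ℂ} (hs : 1 < s.re) :
    ∑' k : ℕ, endpointError s (k + 1) = riemannZeta₁ s - 1 := by
  have hs1 : s ≠ 1 := by rintro rfl; simp at hs
  have htail : Tendsto (fun k : ℕ ↦ ((k : ℂ) + 1) ^ (1 - s)) atTop (𝓝 0) := by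
    simpa using tendsto_nat_add_one_cpow_neg (s := s - 1) (by simpa using hs)
  have hzeta := (hasSum_nat_add_one_cpow_neg hs).tendsto_sum_nat
  have hlim := ((hzeta.const_mul (s - 1)).add htail).sub_const 1
  simp_rw [← sum_range_endpointError] at hlim
  rw [tendsto_nhds_unique (summable_endpointError (by linarith)).hasSum.tendsto_sum_nat hlim,
    riemannZeta_eq_inv_sub_mul hs1]
  field_simp [sub_ne_zero.2 hs1]
  ring

lemma differentiable_endpointError {a : ℝ} (ha : 0 < a) :
    Differentiable ℂ fun s ↦ endpointError s a := by
  have h₁ : (a : ℂ) ≠ 0 := ofReal_ne_zero.2 ha.ne'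
  have h₂ : ((a + 1 : ℝ) : ℂ) ≠ 0 := ofReal_ne_zero.2 (by positivity)
  exact (((differentiable_id.sub_const 1).mul (differentiable_id.neg.const_cpow (.inl h₁))).add
    ((differentiable_id.const_sub 1).const_cpow (.inl h₂))).sub
      ((differentiable_id.const_sub 1).const_cpow (.inl h₁))

lemma differentiableOn_tsum_endpointError :
    DifferentiableOn ℂ (fun s ↦ ∑' k : ℕ, endpointError s (k + 1)) {s | 0 < s.re} := by
  intro s₀ hs₀
  set ε := s₀.re / 2
  set R := ‖s₀‖ + 1
  have hε : 0 < ε := half_pos hs₀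
  set U : Set ℂ := {s | ε < s.re} ∩ Metric.ball 0 R
  have hU : IsOpen U := (isOpen_lt continuous_const continuous_re).inter Metric.isOpen_ball
  have hs₀U : s₀ ∈ U := ⟨show s₀.re / 2 < s₀.re from half_lt_self hs₀, by simp [R]⟩
  have hbound : ∀ (k : ℕ), ∀ s ∈ U,
      ‖endpointError s (k + 1)‖ ≤ (1 + R) * (R * ((k : ℝ) + 1) ^ (-ε - 1)) := by
    rintro k s ⟨hre, hball⟩
    have hR : ‖s‖ ≤ R := (mem_ball_zero_iff.1 hball).le
    have hR' : ‖1 - s‖ ≤ 1 + R := (norm_sub_le _ _).trans (by simpa using hR)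
    refine (norm_endpointError_le (hε.trans hre) (by positivity)).trans ?_
    have hre' : ε ≤ s.re := le_of_lt hre
    gcongr
    linarith
  have hdiff := differentiableOn_tsum_of_summable_norm
    (((summable_nat_add_one_rpow (by linarith)).mul_left R).mul_left (1 + R))
    (fun k ↦ (differentiable_endpointError (by positivity)).differentiableOn) hU hbound
  exact (hdiff.differentiableAt (hU.mem_nhds hs₀U)).differentiableWithinAt

lemma tsum_endpointError {s : ℂ} (hs : 0 < s.re) :
    ∑' k : ℕ, endpointError s (k + 1) = riemannZeta₁ s - 1 := by
  have hopen : IsOpen {s : ℂ | 0 < s.re} := isOpen_lt continuous_const continuous_re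
  have hzeta : AnalyticOnNhd ℂ (fun s ↦ riemannZeta₁ s - 1) {s | 0 < s.re} :=
    (differentiable_riemannZeta₁.sub_const 1).differentiableOn.analyticOnNhd hopen
  have htsum := differentiableOn_tsum_endpointError.analyticOnNhd hopen
  refine htsum.eqOn_of_preconnected_of_eventuallyEq hzeta
    (convex_halfSpace_re_gt 0).isPreconnected (z₀ := 2) (by simp) ?_ hs
  filter_upwards [(isOpen_lt continuous_const continuous_re).mem_nhds
    (show (1 : ℝ) < (2 : ℂ).re by simp)] with s hs
  exact tsum_endpointError_of_one_lt_re hs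

theorem tendsto_sum_cpow_sub_riemannZeta {s : ℂ} (hs : 0 < s.re) (hs1 : s ≠ 1) :
    Tendsto (fun N : ℕ ↦ ∑ k ∈ range N, ((k : ℂ) + 1) ^ (-s) - (N : ℂ) ^ (1 - s) / (1 - s)) atTop
      (𝓝 (riemannZeta s)) := by
  rw [← tendsto_add_atTop_iff_nat 1]
  have h := (summable_endpointError hs).hasSum.tendsto_sum_nat
  rw [tsum_endpointError hs] at h
  have hlim := ((h.add_const 1).const_mul (s - 1)⁻¹).add (tendsto_nat_add_one_cpow_neg hs)
  rw [sub_add_cancel, add_zero, ← riemannZeta_eq_inv_sub_mul hs1] at hlim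
  refine hlim.congr fun N ↦ ?_
  have h₁ := sub_ne_zero.2 hs1
  have h₂ := sub_ne_zero.2 hs1.symm
  rw [sum_range_endpointError, sum_range_succ]
  push_cast
  field_simp
  ring

lemma tendsto_sum_inv_sqrt_sub :
    Tendsto (fun N : ℕ ↦ ((∑ k ∈ range N, (√((k : ℝ) + 1))⁻¹ - 2 * √N : ℝ) : ℂ)) atTop
      (𝓝 (riemannZeta (1 / 2))) := by
  have h := tendsto_sum_cpow_sub_riemannZeta (s := 1 / 2) (by norm_num) (by norm_num)
  refine h.congr fun N ↦ ?_
  have hsqrt (x : ℝ) (hx : 0 ≤ x) : ((√x : ℝ) : ℂ) = (x : ℂ) ^ (1 / 2 : ℂ) := by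
    rw [Real.sqrt_eq_rpow, ofReal_cpow hx]
    norm_num
  push_cast
  congr 1
  · refine sum_congr rfl fun k _ ↦ ?_
    rw [hsqrt _ (by positivity), cpow_neg]
    push_cast
    rfl
  · rw [hsqrt _ (by positivity)]
    norm_num
    ring

/-! ### The Laplace transform of the Lévy kernel -/

lemma rpow_mul_exp_neg_mul_le {σ c u : ℝ} (hσ : 0 ≤ σ) (hc : 0 < c) (hu : 0 ≤ u) :
    u ^ σ * Real.exp (-(c * u)) ≤ (σ / c) ^ σ := by
  rcases hσ.eq_or_lt with rfl | hσ
  · simpa using mul_nonneg hc.le hu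
  have hexp : (c * u / σ) ^ σ ≤ Real.exp (c * u) := by
    calc (c * u / σ) ^ σ ≤ Real.exp (c * u / σ) ^ σ :=
          Real.rpow_le_rpow (by positivity) (by linarith [Real.add_one_le_exp (c * u / σ)]) hσ.le
      _ = Real.exp (c * u) := by rw [← Real.exp_mul]; congr 1; field_simp
  have hsplit : u ^ σ = (σ / c) ^ σ * (c * u / σ) ^ σ := by
    rw [← Real.mul_rpow (by positivity) (by positivity)]; congr 1; field_simp
  rw [hsplit, mul_assoc]
  refine mul_le_of_le_one_right (by positivity) ?_
  rwa [Real.exp_neg, ← div_eq_mul_inv, div_le_one (Real.exp_pos _)]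

lemma rpow_neg_mul_exp_neg_div_le {σ c t : ℝ} (hσ : 0 ≤ σ) (hc : 0 < c) (ht : 0 < t) :
    t ^ (-σ) * Real.exp (-(c / t)) ≤ (σ / c) ^ σ := by
  have h := rpow_mul_exp_neg_mul_le (u := t⁻¹) hσ hc (by positivity)
  rwa [Real.inv_rpow ht.le, ← Real.rpow_neg ht.le, ← div_eq_mul_inv] at h

lemma tendsto_rpow_neg_mul_exp_neg_div_nhdsGT_zero {σ c : ℝ} (hσ : 0 ≤ σ) (hc : 0 < c) :
    Tendsto (fun t : ℝ ↦ t ^ (-σ) * Real.exp (-(c / t))) (𝓝[>] 0) (𝓝 0) := by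
  have hlin : Tendsto (fun t : ℝ ↦ ((σ + 1) / c) ^ (σ + 1) * t) (𝓝[>] 0) (𝓝 0) :=
    (Continuous.tendsto' (by fun_prop) 0 0 (mul_zero _)).mono_left nhdsWithin_le_nhds
  refine squeeze_zero' ?_ ?_ hlin <;> filter_upwards [self_mem_nhdsWithin] with t (ht : 0 < t)
  · positivity
  · rw [show t ^ (-σ) = t ^ (-(σ + 1)) * t by
      rw [← Real.rpow_add_one ht.ne']; ring_nf, mul_right_comm]
    exact mul_le_mul_of_nonneg_right
      (rpow_neg_mul_exp_neg_div_le (by linarith) hc ht) ht.le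

lemma integrableOn_rpow_neg_mul_exp_neg_div {σ c : ℝ} (hσ : 1 < σ) (hc : 0 < c) :
    IntegrableOn (fun t : ℝ ↦ t ^ (-σ) * Real.exp (-(c / t))) (Set.Ioi 0) := by
  have hcont : ContinuousOn (fun t : ℝ ↦ t ^ (-σ) * Real.exp (-(c / t))) (Set.Ioi 0) :=
    fun t (ht : 0 < t) ↦ ContinuousAt.continuousWithinAt <|
      (Real.continuousAt_rpow_const _ _ (Or.inl ht.ne')).mul <|
        Real.continuous_exp.continuousAt.comp (continuousAt_const.div continuousAt_id ht.ne').neg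
  rw [← Set.Ioc_union_Ioi_eq_Ioi (zero_le_one' ℝ), integrableOn_union]
  constructor
  · refine Integrable.mono' (g := fun _ ↦ (σ / c) ^ σ) (integrable_const _)
      ((hcont.mono Set.Ioc_subset_Ioi_self).aestronglyMeasurable measurableSet_Ioc) ?_
    refine ae_restrict_of_forall_mem measurableSet_Ioc fun t ht ↦ ?_
    have := ht.1
    rw [Real.norm_of_nonneg (by positivity)]
    exact rpow_neg_mul_exp_neg_div_le (by linarith) hc ht.1
  · refine Integrable.mono' (integrableOn_Ioi_rpow_of_lt (show -σ < -1 by linarith) one_pos)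
      ((hcont.mono (Set.Ioi_subset_Ioi zero_le_one)).aestronglyMeasurable measurableSet_Ioi) ?_
    refine ae_restrict_of_forall_mem measurableSet_Ioi fun t ht ↦ ?_
    have : 0 < t := one_pos.trans ht
    rw [Real.norm_of_nonneg (by positivity)]
    exact mul_le_of_le_one_right (by positivity)
      (Real.exp_le_one_iff.2 (neg_nonpos.2 (by positivity)))

lemma tendsto_integral_gaussian_atTop :
    Tendsto (fun y : ℝ ↦ ∫ s in (0 : ℝ)..y, Real.exp (-s ^ 2)) atTop (𝓝 (√π / 2)) := by
  have hInt : IntegrableOn (fun s : ℝ ↦ Real.exp (-s ^ 2)) (Set.Ioi 0) := by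
    simpa using (integrable_exp_neg_mul_sq one_pos).integrableOn
  have h := intervalIntegral_tendsto_integral_Ioi 0 hInt tendsto_id
  rwa [show ∫ s in Set.Ioi (0 : ℝ), Real.exp (-s ^ 2) = √π / 2 by
    simpa using integral_gaussian_Ioi 1] at h

lemma tendsto_integral_gaussian_atBot :
    Tendsto (fun y : ℝ ↦ ∫ s in (0 : ℝ)..y, Real.exp (-s ^ 2)) atBot (𝓝 (-(√π / 2))) := by
  refine (tendsto_integral_gaussian_atTop.comp tendsto_neg_atBot_atTop).neg.congr fun y ↦ ?_
  have h := intervalIntegral.integral_comp_neg (a := 0) (b := y) fun s ↦ Real.exp (-s ^ 2)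
  simp only [neg_sq, neg_zero] at h
  rw [Function.comp_apply, h, intervalIntegral.integral_symm, neg_neg]

lemma hasDerivAt_integral_gaussian (y : ℝ) :
    HasDerivAt (fun y : ℝ ↦ ∫ s in (0 : ℝ)..y, Real.exp (-s ^ 2)) (Real.exp (-y ^ 2)) y :=
  (Continuous.integral_hasStrictDerivAt (by fun_prop) 0 y).hasDerivAt

section RealLaplace

variable (p q : ℝ)

/-- An antiderivative of `p t ^ (-3/2) exp (-p²/t - q² t)` on `t > 0`. It comes from
`p² / t + q² t = (q√t - p/√t)² + 2pq = (q√t + p/√t)² - 2pq`. -/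
noncomputable def levyPrimitive (t : ℝ) : ℝ :=
  Real.exp (-(2 * p * q)) * (∫ s in (0 : ℝ)..q * √t - p / √t, Real.exp (-s ^ 2)) -
    Real.exp (2 * p * q) * ∫ s in (0 : ℝ)..q * √t + p / √t, Real.exp (-s ^ 2)

lemma hasDerivAt_levyPrimitive {t : ℝ} (ht : 0 < t) :
    HasDerivAt (levyPrimitive p q)
      (p * (t ^ (-(3 / 2) : ℝ) * Real.exp (-(p ^ 2 / t)) * Real.exp (-(q ^ 2 * t)))) t := by
  have hs : 0 < √t := Real.sqrt_pos.2 ht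
  have hsq : √t ^ 2 = t := Real.sq_sqrt ht.le
  have hsqrt := Real.hasDerivAt_sqrt ht.ne'
  have hmul := hsqrt.const_mul q
  have hdiv := (hasDerivAt_const t p).fun_div hsqrt hs.ne'
  have hminus := ((hasDerivAt_integral_gaussian _).comp t (hmul.fun_sub hdiv)).const_mul
    (Real.exp (-(2 * p * q)))
  have hplus := ((hasDerivAt_integral_gaussian _).comp t (hmul.fun_add hdiv)).const_mul
    (Real.exp (2 * p * q))
  refine (hminus.fun_sub hplus).congr_deriv ?_
  have hpow : t ^ (-(3 / 2) : ℝ) = (√t ^ 3)⁻¹ := by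
    rw [Real.rpow_neg ht.le, Real.sqrt_eq_rpow, ← Real.rpow_mul_natCast ht.le]; norm_num
  have hexp_minus : Real.exp (-(2 * p * q)) * Real.exp (-(q * √t - p / √t) ^ 2) =
      Real.exp (-(p ^ 2 / t)) * Real.exp (-(q ^ 2 * t)) := by
    rw [← Real.exp_add, ← Real.exp_add]; congr 1; field_simp; rw [hsq]; ring
  have hexp_plus : Real.exp (2 * p * q) * Real.exp (-(q * √t + p / √t) ^ 2) =
      Real.exp (-(p ^ 2 / t)) * Real.exp (-(q ^ 2 * t)) := by
    rw [← Real.exp_add, ← Real.exp_add]; congr 1; field_simp; rw [hsq]; ring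
  rw [← mul_assoc, ← mul_assoc, hexp_minus, hexp_plus, hpow]
  field_simp
  ring

variable {p q}

lemma tendsto_levyPrimitive_nhdsGT_zero (hp : 0 < p) :
    Tendsto (levyPrimitive p q) (𝓝[>] 0)
      (𝓝 (Real.exp (-(2 * p * q)) * -(√π / 2) - Real.exp (2 * p * q) * (√π / 2))) := by
  have hsqrt : Tendsto (√·) (𝓝[>] (0 : ℝ)) (𝓝[>] 0) := by
    refine tendsto_nhdsWithin_iff.2
      ⟨?_, by filter_upwards [self_mem_nhdsWithin] with t ht using Real.sqrt_pos.2 ht⟩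
    simpa using (Real.continuous_sqrt.tendsto 0).mono_left nhdsWithin_le_nhds
  have hq : Tendsto (fun t ↦ q * √t) (𝓝[>] 0) (𝓝 0) := by
    simpa using (hsqrt.mono_right nhdsWithin_le_nhds).const_mul q
  have hp : Tendsto (fun t ↦ p / √t) (𝓝[>] 0) atTop := by
    simpa [div_eq_mul_inv] using (tendsto_inv_nhdsGT_zero.comp hsqrt).const_mul_atTop hp
  exact ((tendsto_integral_gaussian_atBot.comp
      (hq.add_atBot (tendsto_neg_atTop_atBot.comp hp))).const_mul _).sub
    ((tendsto_integral_gaussian_atTop.comp (hq.add_atTop hp)).const_mul _)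

lemma tendsto_levyPrimitive_atTop (hq : 0 < q) :
    Tendsto (levyPrimitive p q) atTop
      (𝓝 (Real.exp (-(2 * p * q)) * (√π / 2) - Real.exp (2 * p * q) * (√π / 2))) := by
  have hq : Tendsto (fun t ↦ q * √t) atTop atTop := Real.tendsto_sqrt_atTop.const_mul_atTop hq
  have hp : Tendsto (fun t ↦ p / √t) atTop (𝓝 0) := Real.tendsto_sqrt_atTop.const_div_atTop p
  have hp' : Tendsto (fun t ↦ -(p / √t)) atTop (𝓝 0) := by simpa using hp.neg
  exact ((tendsto_integral_gaussian_atTop.comp (hq.atTop_add hp')).const_mul _).sub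
    ((tendsto_integral_gaussian_atTop.comp (hq.atTop_add hp)).const_mul _)

lemma integral_rpow_mul_exp_neg_div_mul_exp_neg_mul (hp : 0 < p) (hq : 0 < q) :
    ∫ t in Set.Ioi (0 : ℝ),
        t ^ (-(3 / 2) : ℝ) * Real.exp (-(p ^ 2 / t)) * Real.exp (-(q ^ 2 * t)) =
      √π / p * Real.exp (-(2 * p * q)) := by
  have hInt : IntegrableOn (fun t : ℝ ↦
      p * (t ^ (-(3 / 2) : ℝ) * Real.exp (-(p ^ 2 / t)) * Real.exp (-(q ^ 2 * t))))
      (Set.Ioi 0) := by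
    refine Integrable.const_mul (Integrable.mul_bdd (c := 1)
      (integrableOn_rpow_neg_mul_exp_neg_div (by norm_num) (by positivity))
      (Continuous.aestronglyMeasurable (by fun_prop)) ?_) p
    refine ae_restrict_of_forall_mem measurableSet_Ioi fun t (ht : 0 < t) ↦ ?_
    rw [Real.norm_of_nonneg (Real.exp_pos _).le, Real.exp_le_one_iff]
    have := mul_pos (pow_pos hq 2) ht
    linarith
  have h := integral_Ioi_deriv_mul_eq_sub (u := levyPrimitive p q) (v := fun _ ↦ 1)
    (v' := fun _ ↦ 0) (a := 0) (fun t ht ↦ hasDerivAt_levyPrimitive p q ht)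
    (fun t _ ↦ hasDerivAt_const t 1) (by simpa [Pi.mul_def, Pi.add_def] using hInt)
    (by simpa [Pi.mul_def] using tendsto_levyPrimitive_nhdsGT_zero hp)
    (by simpa [Pi.mul_def] using tendsto_levyPrimitive_atTop hq)
  simp only [mul_one, mul_zero, add_zero] at h
  rw [integral_const_mul] at h
  rw [div_mul_eq_mul_div, eq_div_iff hp.ne', mul_comm, h]
  ring

end RealLaplace

section Laplace

/-- The Laplace transform `B ↦ ∫₀^∞ φ(t) e^(-B t) dt`. -/
noncomputable def laplace (φ : ℝ → ℂ) (B : ℂ) : ℂ := ∫ t in Set.Ioi (0 : ℝ), φ t * exp (-(B * t))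

lemma norm_exp_neg_mul_ofReal_le_one {B : ℂ} (hB : 0 ≤ B.re) {t : ℝ} (ht : 0 ≤ t) :
    ‖exp (-(B * t))‖ ≤ 1 := by
  rw [norm_exp, neg_re, re_mul_ofReal, Real.exp_le_one_iff, neg_nonpos]
  exact mul_nonneg hB ht

variable {φ φ' : ℝ → ℂ} {B : ℂ}

lemma aestronglyMeasurable_mul_exp (hφ : IntegrableOn φ (Set.Ioi 0)) (B : ℂ) :
    AEStronglyMeasurable (fun t : ℝ ↦ φ t * exp (-(B * t))) (volume.restrict (Set.Ioi 0)) :=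
  hφ.aestronglyMeasurable.mul (Continuous.aestronglyMeasurable (by fun_prop))

lemma norm_mul_exp_le (hB : 0 ≤ B.re) :
    ∀ᵐ t : ℝ ∂volume.restrict (Set.Ioi 0), ‖φ t * exp (-(B * t))‖ ≤ ‖φ t‖ :=
  ae_restrict_of_forall_mem measurableSet_Ioi fun t (ht : 0 < t) ↦ (norm_mul _ _).trans_le <|
    mul_le_of_le_one_right (norm_nonneg _) (norm_exp_neg_mul_ofReal_le_one hB ht.le)

lemma integrableOn_mul_exp (hφ : IntegrableOn φ (Set.Ioi 0)) (hB : 0 ≤ B.re) :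
    IntegrableOn (fun t : ℝ ↦ φ t * exp (-(B * t))) (Set.Ioi 0) :=
  hφ.norm.mono' (aestronglyMeasurable_mul_exp hφ B) (norm_mul_exp_le hB)

lemma continuousOn_laplace (hφ : IntegrableOn φ (Set.Ioi 0)) :
    ContinuousOn (laplace φ) {B : ℂ | 0 ≤ B.re} :=
  continuousOn_of_dominated (bound := (‖φ ·‖)) (fun B _ ↦ aestronglyMeasurable_mul_exp hφ B)
    (fun _ hB ↦ norm_mul_exp_le hB) hφ.norm (ae_of_all _ fun t ↦ by fun_prop)

lemma differentiableAt_laplace (hφ : IntegrableOn φ (Set.Ioi 0)) (hB : 0 < B.re) :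
    DifferentiableAt ℂ (laplace φ) B := by
  set δ := B.re / 2 with hδ
  have hδ0 : 0 < δ := half_pos hB
  refine (hasDerivAt_integral_of_dominated_loc_of_deriv_le
    (μ := volume.restrict (Set.Ioi (0 : ℝ)))
    (F := fun (B : ℂ) (t : ℝ) ↦ φ t * exp (-(B * t)))
    (F' := fun (B : ℂ) (t : ℝ) ↦ φ t * (exp (-(B * t)) * -(1 * (t : ℂ))))
    (s := Metric.ball B δ) (bound := fun t ↦ ‖φ t‖ * (1 / δ)) (Metric.ball_mem_nhds _ hδ0)
    (.of_forall fun B ↦ aestronglyMeasurable_mul_exp hφ B) (integrableOn_mul_exp hφ hB.le)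
    (hφ.aestronglyMeasurable.mul (Continuous.aestronglyMeasurable (by fun_prop)))
    (ae_restrict_of_forall_mem measurableSet_Ioi fun t (ht : 0 < t) C hC ↦ ?_)
    (hφ.norm.mul_const _) (ae_of_all _ fun t C _ ↦
      (((hasDerivAt_id C).mul_const (t : ℂ)).neg).cexp.const_mul (φ t))).2.differentiableAt
  have hCre : δ < C.re := by
    have h := (abs_re_le_norm (C - B)).trans_lt (by simpa [dist_eq_norm] using hC)
    rw [sub_re, abs_lt] at h
    linarith [h.1]
  rw [norm_mul, norm_mul, norm_exp, neg_re, re_mul_ofReal, one_mul, norm_neg, norm_real,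
    Real.norm_of_nonneg ht.le]
  gcongr
  calc Real.exp (-(C.re * t)) * t ≤ Real.exp (-(δ * t)) * t := by gcongr
    _ ≤ 1 / δ := by
      rw [Real.exp_neg, inv_mul_eq_div, div_le_div_iff₀ (Real.exp_pos _) hδ0]
      linarith [Real.add_one_le_exp (δ * t)]

lemma laplace_deriv (hφ : IntegrableOn φ (Set.Ioi 0)) (hφ' : IntegrableOn φ' (Set.Ioi 0))
    (hderiv : ∀ t ∈ Set.Ioi 0, HasDerivAt φ (φ' t) t) (hzero : Tendsto φ (𝓝[>] 0) (𝓝 0))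
    (hB : 0 ≤ B.re) : laplace φ' B = B * laplace φ B := by
  have hexp : ∀ t ∈ Set.Ioi (0 : ℝ), HasDerivAt (fun t : ℝ ↦ exp (-(B * t)))
      (-B * exp (-(B * t))) t := fun t _ ↦ by
    have h : HasDerivAt (fun y : ℂ ↦ -(B * y)) (-B) (t : ℂ) := by
      simpa using ((hasDerivAt_id (t : ℂ)).const_mul B).fun_neg
    exact h.cexp.comp_ofReal.congr_deriv (mul_comm _ _)
  have hlim {L : Filter ℝ} (hL : ∀ᶠ t in L, 0 < t) (h : Tendsto φ L (𝓝 0)) :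
      Tendsto (φ * fun t : ℝ ↦ exp (-(B * t))) L (𝓝 0) :=
    h.zero_mul_isBoundedUnder_le (isBoundedUnder_of_eventually_le (a := 1)
      (hL.mono fun t ht ↦ norm_exp_neg_mul_ofReal_le_one hB ht.le))
  have hparts := integral_Ioi_mul_deriv_eq_deriv_mul hderiv hexp
    (((integrableOn_mul_exp hφ hB).const_mul (-B)).congr (ae_of_all _ fun t ↦ by
      simp only [Pi.mul_apply]; ring))
    (integrableOn_mul_exp hφ' hB) (hlim self_mem_nhdsWithin hzero)
    (hlim (eventually_gt_atTop 0) (tendsto_zero_of_hasDerivAt_of_integrableOn_Ioi hderiv hφ' hφ))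
  simp only [sub_zero, zero_sub] at hparts
  rw [laplace, laplace, ← neg_eq_iff_eq_neg.2 hparts, ← integral_const_mul, ← integral_neg]
  congr with t
  ring

end Laplace

/-- The kernel `z ^ (-3/2) exp (-A / z)`, up to normalisation the density of a Lévy distribution.
Its Laplace transform produces the exponentials `exp (-2 √(A B))`. -/
noncomputable def levyKernel (A : ℝ) (z : ℂ) : ℂ := z ^ (-(3 / 2) : ℂ) * exp (-(A / z))

lemma levyKernel_ofReal (A : ℝ) {t : ℝ} (ht : 0 ≤ t) :
    levyKernel A t = (t ^ (-(3 / 2) : ℝ) * Real.exp (-(A / t)) : ℝ) := by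
  rw [levyKernel]
  push_cast [ofReal_cpow ht]
  rfl

/-- The open right half-plane. -/
def rightHalfPlane : Set ℂ := {z : ℂ | 0 < z.re}

lemma isOpen_rightHalfPlane : IsOpen rightHalfPlane := isOpen_lt continuous_const continuous_re

lemma ofReal_mem_rightHalfPlane {t : ℝ} : (t : ℂ) ∈ rightHalfPlane ↔ 0 < t := by
  simp [rightHalfPlane]

lemma ne_zero_of_mem_rightHalfPlane {z : ℂ} (hz : z ∈ rightHalfPlane) : z ≠ 0 := by
  rintro rfl
  simp [rightHalfPlane] at hz

lemma differentiableOn_cpow_const_rightHalfPlane (s : ℂ) :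
    DifferentiableOn ℂ (fun z ↦ z ^ s) rightHalfPlane := fun _ hz ↦
  (differentiableAt_id.cpow_const (Or.inl hz)).differentiableWithinAt

lemma differentiableOn_levyKernel (A : ℝ) : DifferentiableOn ℂ (levyKernel A) rightHalfPlane :=
  (differentiableOn_cpow_const_rightHalfPlane _).mul
    (by fun_prop (disch := exact fun _ ↦ ne_zero_of_mem_rightHalfPlane))

lemma differentiableOn_iteratedDeriv {f : ℂ → ℂ} {U : Set ℂ} (hU : IsOpen U)
    (hf : DifferentiableOn ℂ f U) (l : ℕ) : DifferentiableOn ℂ (iteratedDeriv l f) U := by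
  induction l with
  | zero => simpa only [iteratedDeriv_zero] using hf
  | succ l ih => exact iteratedDeriv_succ (f := f) ▸ ih.deriv hU

lemma hasDerivAt_iteratedDeriv_ofReal {f : ℂ → ℂ} (hf : DifferentiableOn ℂ f rightHalfPlane)
    (l : ℕ) {t : ℝ} (ht : 0 < t) :
    HasDerivAt (fun t : ℝ ↦ iteratedDeriv l f t) (iteratedDeriv (l + 1) f t) t := by
  have h := ((differentiableOn_iteratedDeriv isOpen_rightHalfPlane hf l).differentiableAt
    (isOpen_rightHalfPlane.mem_nhds (ofReal_mem_rightHalfPlane.2 ht))).hasDerivAt.comp_ofReal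
  rwa [← iteratedDeriv_succ] at h

section ClosedBall

variable {t : ℝ} {z : ℂ}

lemma half_le_re_of_mem_closedBall (hz : z ∈ Metric.closedBall (t : ℂ) (t / 2)) :
    t / 2 ≤ z.re := by
  have h := (abs_re_le_norm (z - t)).trans (mem_closedBall_iff_norm.1 hz)
  rw [sub_re, ofReal_re, abs_le] at h
  linarith

lemma half_le_norm_of_mem_closedBall (hz : z ∈ Metric.closedBall (t : ℂ) (t / 2)) :
    t / 2 ≤ ‖z‖ :=
  (half_le_re_of_mem_closedBall hz).trans (re_le_norm z)

lemma norm_le_of_mem_closedBall (ht : 0 < t) (hz : z ∈ Metric.closedBall (t : ℂ) (t / 2)) :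
    ‖z‖ ≤ 3 * t / 2 := by
  have h := norm_le_norm_add_norm_sub' z (t : ℂ)
  rw [norm_real, Real.norm_of_nonneg ht.le] at h
  linarith [mem_closedBall_iff_norm.1 hz]

lemma closedBall_half_subset_rightHalfPlane (ht : 0 < t) :
    Metric.closedBall (t : ℂ) (t / 2) ⊆ rightHalfPlane :=
  fun _ hz ↦ (half_pos ht).trans_le (half_le_re_of_mem_closedBall hz)

lemma norm_iteratedDeriv_le_of_closedBall {f : ℂ → ℂ} (hf : DifferentiableOn ℂ f rightHalfPlane)
    {C : ℝ} (ht : 0 < t) (l : ℕ) (hC : ∀ z ∈ Metric.closedBall (t : ℂ) (t / 2), ‖f z‖ ≤ C) :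
    ‖iteratedDeriv l f t‖ ≤ l.factorial * C / (t / 2) ^ l := by
  refine norm_iteratedDeriv_le_of_forall_mem_sphere_norm_le l (half_pos ht) ?_
    fun z hz ↦ hC z (Metric.sphere_subset_closedBall hz)
  refine (hf.mono ?_).diffContOnCl
  rw [closure_ball _ (half_pos ht).ne']
  exact closedBall_half_subset_rightHalfPlane ht

lemma norm_cpow_neg_le_of_mem_closedBall {r : ℝ} (hr : 0 ≤ r) (ht : 0 < t)
    (hz : z ∈ Metric.closedBall (t : ℂ) (t / 2)) : ‖z ^ ((-r : ℝ) : ℂ)‖ ≤ (t / 2) ^ (-r) := by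
  rw [norm_cpow_real]
  exact Real.rpow_le_rpow_of_nonpos (half_pos ht) (half_le_norm_of_mem_closedBall hz)
    (neg_nonpos.2 hr)

lemma norm_exp_neg_div_le_of_mem_closedBall {A : ℝ} (hA : 0 ≤ A) (ht : 0 < t)
    (hz : z ∈ Metric.closedBall (t : ℂ) (t / 2)) :
    ‖exp (-(A / z))‖ ≤ Real.exp (-(2 * A / 9 / t)) := by
  have hz0 : 0 < ‖z‖ := (half_pos ht).trans_le (half_le_norm_of_mem_closedBall hz)
  have hinv : 2 / (9 * t) ≤ z.re / ‖z‖ ^ 2 := by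
    rw [div_le_div_iff₀ (by positivity) (by positivity)]
    nlinarith [mul_self_le_mul_self hz0.le (norm_le_of_mem_closedBall ht hz),
      half_le_re_of_mem_closedBall hz]
  rw [norm_exp, Real.exp_le_exp, neg_re, neg_le_neg_iff]
  calc 2 * A / 9 / t = A * (2 / (9 * t)) := by field_simp
    _ ≤ A * (z.re / ‖z‖ ^ 2) := by gcongr
    _ = (A / z).re := by
      rw [div_eq_mul_inv (A : ℂ), re_ofReal_mul, inv_re, normSq_eq_norm_sq]

end ClosedBall

lemma exists_norm_iteratedDeriv_levyKernel_le (l : ℕ) :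
    ∃ C : ℝ, 0 ≤ C ∧ ∀ A t : ℝ, 0 ≤ A → 0 < t → ‖iteratedDeriv l (levyKernel A) t‖ ≤
      C * (t ^ (-(l + 3 / 2) : ℝ) * Real.exp (-(2 * A / 9 / t))) := by
  refine ⟨l.factorial * (1 / 2 : ℝ) ^ (-(l + 3 / 2) : ℝ), by positivity, fun A t hA ht ↦ ?_⟩
  have hball : ∀ z ∈ Metric.closedBall (t : ℂ) (t / 2), ‖levyKernel A z‖ ≤
      (t / 2) ^ (-(3 / 2) : ℝ) * Real.exp (-(2 * A / 9 / t)) := fun z hz ↦ by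
    have hpow := norm_cpow_neg_le_of_mem_closedBall (r := 3 / 2) (by norm_num) ht hz
    push_cast at hpow
    rw [levyKernel, norm_mul]
    exact mul_le_mul hpow (norm_exp_neg_div_le_of_mem_closedBall hA ht hz) (norm_nonneg _)
      (by positivity)
  have hpow : t ^ (-(l + 3 / 2) : ℝ) * (1 / 2 : ℝ) ^ (-(l + 3 / 2) : ℝ) =
      (t / 2) ^ (-(3 / 2) : ℝ) / (t / 2) ^ l := by
    rw [← Real.mul_rpow ht.le (by norm_num), mul_one_div, ← Real.rpow_natCast,
      ← Real.rpow_sub (by positivity)]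
    congr 1
    ring
  calc ‖iteratedDeriv l (levyKernel A) t‖
      ≤ l.factorial * ((t / 2) ^ (-(3 / 2) : ℝ) * Real.exp (-(2 * A / 9 / t))) / (t / 2) ^ l :=
        norm_iteratedDeriv_le_of_closedBall (differentiableOn_levyKernel A) ht l hball
    _ = l.factorial * ((t / 2) ^ (-(3 / 2) : ℝ) / (t / 2) ^ l) *
          Real.exp (-(2 * A / 9 / t)) := by ring
    _ = _ := by rw [← hpow]; ring

section IteratedDeriv

variable {A : ℝ} (hA : 0 < A) (l : ℕ)
include hA

lemma integrableOn_iteratedDeriv_levyKernel :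
    IntegrableOn (fun t : ℝ ↦ iteratedDeriv l (levyKernel A) t) (Set.Ioi 0) := by
  obtain ⟨C, -, hC⟩ := exists_norm_iteratedDeriv_levyKernel_le l
  refine Integrable.mono' ((integrableOn_rpow_neg_mul_exp_neg_div (σ := l + 3 / 2)
    (c := 2 * A / 9) (by linarith [l.cast_nonneg (α := ℝ)]) (by positivity)).const_mul C) ?_
    (ae_restrict_of_forall_mem measurableSet_Ioi fun t ht ↦ hC A t hA.le ht)
  exact ContinuousOn.aestronglyMeasurable (fun t ht ↦ (hasDerivAt_iteratedDeriv_ofReal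
    (differentiableOn_levyKernel A) l ht).continuousAt.continuousWithinAt) measurableSet_Ioi

lemma tendsto_iteratedDeriv_levyKernel_nhdsGT_zero :
    Tendsto (fun t : ℝ ↦ iteratedDeriv l (levyKernel A) t) (𝓝[>] 0) (𝓝 0) := by
  obtain ⟨C, -, hC⟩ := exists_norm_iteratedDeriv_levyKernel_le l
  have hbound := (tendsto_rpow_neg_mul_exp_neg_div_nhdsGT_zero (σ := l + 3 / 2) (c := 2 * A / 9)
    (by positivity) (by positivity)).const_mul C
  rw [mul_zero] at hbound
  refine squeeze_zero_norm' ?_ hbound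
  filter_upwards [self_mem_nhdsWithin] with t ht using hC A t hA.le ht

lemma laplace_iteratedDeriv_levyKernel {B : ℂ} (hB : 0 ≤ B.re) :
    laplace (fun t ↦ iteratedDeriv l (levyKernel A) t) B =
      B ^ l * laplace (fun t ↦ levyKernel A t) B := by
  induction l with
  | zero => simp only [iteratedDeriv_zero, pow_zero, one_mul]
  | succ l ih =>
    rw [laplace_deriv (integrableOn_iteratedDeriv_levyKernel hA l)
      (integrableOn_iteratedDeriv_levyKernel hA (l + 1))
      (fun t ht ↦ hasDerivAt_iteratedDeriv_ofReal (differentiableOn_levyKernel A) l ht)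
      (tendsto_iteratedDeriv_levyKernel_nhdsGT_zero hA l) hB, ih, pow_succ']
    ring

lemma laplace_levyKernel_ofReal {b : ℝ} (hb : 0 < b) :
    laplace (fun t ↦ levyKernel A t) b = √(π / A) * exp (-(2 * √A * (b : ℂ) ^ (1 / 2 : ℂ))) := by
  have h := integral_rpow_mul_exp_neg_div_mul_exp_neg_mul (Real.sqrt_pos.2 hA) (Real.sqrt_pos.2 hb)
  rw [Real.sq_sqrt hA.le, Real.sq_sqrt hb.le, ← Real.sqrt_div Real.pi_pos.le] at h
  calc laplace (fun t ↦ levyKernel A t) b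
      = (∫ t in Set.Ioi (0 : ℝ),
          t ^ (-(3 / 2) : ℝ) * Real.exp (-(A / t)) * Real.exp (-(b * t)) : ℝ) := by
        rw [laplace, ← integral_complex_ofReal]
        refine setIntegral_congr_fun measurableSet_Ioi fun t (ht : 0 < t) ↦ ?_
        simp only [levyKernel_ofReal _ ht.le]
        push_cast
        rfl
    _ = √(π / A) * exp (-(2 * √A * (b : ℂ) ^ (1 / 2 : ℂ))) := by
        rw [h, Real.sqrt_eq_rpow b]
        push_cast [ofReal_cpow hb.le]
        rfl

lemma laplace_levyKernel_of_re_pos : Set.EqOn (laplace fun t ↦ levyKernel A t)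
    (fun B ↦ √(π / A) * exp (-(2 * √A * B ^ (1 / 2 : ℂ)))) rightHalfPlane := by
  have hInt := integrableOn_iteratedDeriv_levyKernel hA 0
  simp only [iteratedDeriv_zero] at hInt
  have hleft : DifferentiableOn ℂ (laplace fun t ↦ levyKernel A t) rightHalfPlane := fun B hB ↦
    (differentiableAt_laplace hInt hB).differentiableWithinAt
  have hright : DifferentiableOn ℂ (fun B : ℂ ↦ √(π / A) * exp (-(2 * √A * B ^ (1 / 2 : ℂ))))
      rightHalfPlane :=
    (((differentiableOn_cpow_const_rightHalfPlane _).const_mul _).neg.cexp).const_mul _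
  refine (hleft.analyticOnNhd isOpen_rightHalfPlane).eqOn_of_preconnected_of_frequently_eq
    (hright.analyticOnNhd isOpen_rightHalfPlane) (convex_halfSpace_re_gt 0).isPreconnected
    (z₀ := 1) (by simp [rightHalfPlane]) ?_
  have hreal : Tendsto ofReal (𝓝[≠] (1 : ℝ)) (𝓝[≠] (1 : ℂ)) :=
    tendsto_nhdsWithin_iff.2 ⟨(continuous_ofReal.tendsto' 1 1 ofReal_one).mono_left
      nhdsWithin_le_nhds, by filter_upwards [self_mem_nhdsWithin] with b hb; simpa using hb⟩
  refine hreal.frequently (Eventually.frequently ?_)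
  filter_upwards [nhdsWithin_le_nhds (lt_mem_nhds one_pos)] with b hb using
    laplace_levyKernel_ofReal hA hb

lemma laplace_levyKernel {B : ℂ} (hB : 0 ≤ B.re) :
    laplace (fun t ↦ levyKernel A t) B = √(π / A) * exp (-(2 * √A * B ^ (1 / 2 : ℂ))) := by
  have hInt := integrableOn_iteratedDeriv_levyKernel hA 0
  simp only [iteratedDeriv_zero] at hInt
  have hcont : ContinuousOn (fun B : ℂ ↦ √(π / A) * exp (-(2 * √A * B ^ (1 / 2 : ℂ))))
      {B : ℂ | 0 ≤ B.re} := fun B hB ↦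
    ((((continuousAt_cpow_const_of_re_pos (Or.inl hB) (by norm_num)).const_mul
      _).neg.cexp).const_mul _).continuousWithinAt
  exact (laplace_levyKernel_of_re_pos hA).of_subset_closure (continuousOn_laplace hInt) hcont
    (fun B (hB : 0 < B.re) ↦ hB.le) (closure_setOfPred_lt_re 0).ge hB

end IteratedDeriv

/-! ### Poisson summation -/

section Poisson

open scoped FourierTransform

variable {φ : ℝ → ℂ}

/-- The even function on `ℝ` that agrees with `φ` on `(0, ∞)`, with the value `0` at `0`. -/
noncomputable def evenExtension (φ : ℝ → ℂ) : ℝ → ℂ := Function.update (fun t ↦ φ |t|) 0 0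

lemma evenExtension_zero : evenExtension φ 0 = 0 := Function.update_self ..

lemma evenExtension_of_ne_zero {t : ℝ} (ht : t ≠ 0) : evenExtension φ t = φ |t| :=
  Function.update_of_ne ht ..

lemma evenExtension_of_pos {t : ℝ} (ht : 0 < t) : evenExtension φ t = φ t := by
  rw [evenExtension_of_ne_zero ht.ne', abs_of_pos ht]

lemma evenExtension_neg (t : ℝ) : evenExtension φ (-t) = evenExtension φ t := by
  rcases eq_or_ne t 0 with rfl | ht
  · rw [neg_zero]
  · rw [evenExtension_of_ne_zero ht, evenExtension_of_ne_zero (neg_ne_zero.2 ht), abs_neg]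

lemma continuous_evenExtension (hφ : ContinuousOn φ (Set.Ioi 0))
    (hzero : Tendsto φ (𝓝[>] 0) (𝓝 0)) : Continuous (evenExtension φ) := by
  refine continuous_iff_continuousAt.2 fun t ↦ ?_
  rcases eq_or_ne t 0 with rfl | ht
  · refine continuousAt_update_same.2 (hzero.comp (tendsto_nhdsWithin_iff.2 ⟨?_, ?_⟩))
    · exact (continuous_abs.tendsto' 0 0 abs_zero).mono_left nhdsWithin_le_nhds
    · filter_upwards [self_mem_nhdsWithin] with t ht using abs_pos.2 ht
  · exact (continuousAt_update_of_ne ht).2 <|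
      (hφ.continuousAt (Ioi_mem_nhds (abs_pos.2 ht))).comp continuous_abs.continuousAt

lemma fourier_evenExtension (hφ : IntegrableOn φ (Set.Ioi 0)) (ν : ℝ) :
    𝓕 (evenExtension φ) ν = laplace φ (2 * π * I * ν) + laplace φ (-(2 * π * I * ν)) := by
  rw [Real.fourier_real_eq_integral_exp_smul]
  set g : ℝ → ℂ := fun v ↦ exp (↑(-2 * π * v * ν) * I) • evenExtension φ v with hg
  have hpos : ∀ v ∈ Set.Ioi (0 : ℝ), φ v * exp (-(2 * π * I * ν * v)) = g v := fun v hv ↦ by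
    simp only [hg]
    rw [evenExtension_of_pos hv, smul_eq_mul, mul_comm]
    push_cast
    ring_nf
  have hneg : ∀ v ∈ Set.Ioi (0 : ℝ), φ v * exp (-(-(2 * π * I * ν) * v)) = g (-v) :=
      fun v hv ↦ by
    simp only [hg]
    rw [evenExtension_neg, evenExtension_of_pos hv, smul_eq_mul, mul_comm]
    push_cast
    ring_nf
  have hint_pos : IntegrableOn g (Set.Ioi 0) :=
    (integrableOn_mul_exp hφ (by simp)).congr_fun hpos measurableSet_Ioi
  have hint_neg : IntegrableOn g (Set.Iic 0) := by
    have h : IntegrableOn (fun v ↦ g (-v)) (Set.Ici (-0)) := by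
      rw [neg_zero, integrableOn_Ici_iff_integrableOn_Ioi]
      exact (integrableOn_mul_exp hφ (by simp)).congr_fun hneg measurableSet_Ioi
    simpa using h.comp_neg_Iic
  rw [← intervalIntegral.integral_Iic_add_Ioi hint_neg hint_pos, add_comm, laplace, laplace,
    setIntegral_congr_fun measurableSet_Ioi hpos, setIntegral_congr_fun measurableSet_Ioi hneg,
    integral_comp_neg_Ioi, neg_zero]

lemma tsum_pnat_eq_laplace_zero_add_tsum (hInt : IntegrableOn φ (Set.Ioi 0))
    (hcont : ContinuousOn φ (Set.Ioi 0)) (hzero : Tendsto φ (𝓝[>] 0) (𝓝 0)) {b C : ℝ} (hb : 1 < b)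
    (hdecay : ∀ t, 0 < t → ‖φ t‖ ≤ C * t ^ (-b))
    (hsum : Summable fun n : ℕ ↦ laplace φ (2 * π * I * n) + laplace φ (-(2 * π * I * n))) :
    ∑' k : ℕ+, φ k = laplace φ 0 +
      ∑' n : ℕ+, (laplace φ (2 * π * I * n) + laplace φ (-(2 * π * I * n))) := by
  have hO : evenExtension φ =O[cocompact ℝ] (|·| ^ (-b)) := by
    refine .of_bound C (mem_of_superset (isCompact_singleton (x := 0)).compl_mem_cocompact ?_)
    intro t (ht : t ≠ 0)
    rw [Set.mem_ofPred_eq, evenExtension_of_ne_zero ht, Real.norm_of_nonneg (by positivity)]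
    exact hdecay _ (abs_pos.2 ht)
  have heven (ν : ℝ) : 𝓕 (evenExtension φ) (-ν) = 𝓕 (evenExtension φ) ν := by
    rw [fourier_evenExtension hInt, fourier_evenExtension hInt, add_comm]
    push_cast
    rw [mul_neg, neg_neg]
  have hsumF : Summable fun n : ℤ ↦ 𝓕 (evenExtension φ) n := by
    refine .of_nat_of_neg ?_ ?_ <;> push_cast <;>
      simpa only [heven, fourier_evenExtension hInt, ofReal_natCast] using hsum
  have hsum_even : Summable fun n : ℤ ↦ evenExtension φ n :=
    summable_of_isBigO (Real.summable_abs_int_rpow hb)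
      (hO.comp_tendsto Int.tendsto_coe_cofinite)
  have h := Real.tsum_eq_tsum_fourier_of_rpow_decay_of_summable
    (continuous_evenExtension hcont hzero) hb hO hsumF 0
  simp only [zero_add, QuotientAddGroup.mk_zero, fourier_eval_zero, mul_one] at h
  rw [tsum_int_eq_zero_add_two_mul_tsum_pnat (fun n ↦ by push_cast; exact evenExtension_neg _)
      hsum_even,
    tsum_int_eq_zero_add_two_mul_tsum_pnat (fun n ↦ by push_cast; exact heven _) hsumF] at h
  simp only [Int.cast_zero, Int.cast_natCast, evenExtension_zero, fourier_evenExtension hInt,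
    ofReal_zero, ofReal_natCast, mul_zero, neg_zero, zero_add] at h
  rw [tsum_congr fun k : ℕ+ ↦ evenExtension_of_pos (φ := φ) (Nat.cast_pos.2 k.pos)] at h
  linear_combination h / 2

end Poisson

/-- The damped cosine `exp (-θ) cos θ`, which is the real part of `exp (-(1 + I) θ)`. -/
noncomputable def expCos (θ : ℝ) : ℝ := Real.exp (-θ) * Real.cos θ

lemma abs_expCos_le (θ : ℝ) : |expCos θ| ≤ Real.exp (-θ) := by
  rw [expCos, abs_mul, Real.abs_exp]
  exact mul_le_of_le_one_right (Real.exp_pos _).le (Real.abs_cos_le_one θ)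

lemma ofReal_expCos (θ : ℝ) :
    (expCos θ : ℂ) = (exp (-((1 + I) * θ)) + exp (-((1 - I) * θ))) / 2 := by
  rw [expCos]
  push_cast
  rw [Complex.cos, show -((1 + I) * θ) = -θ + -θ * I by ring,
    show -((1 - I) * θ) = -θ + θ * I by ring, exp_add, exp_add]
  ring

lemma exists_pow_mul_exp_neg_mul_sqrt_le (j : ℕ) {c : ℝ} (hc : 0 < c) : ∃ K : ℝ, 0 < K ∧
    ∀ u : ℝ, 0 < u → u ^ j * Real.exp (-(c * √u)) ≤ K * (u ^ 2)⁻¹ := by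
  refine ⟨((2 * (j + 2) : ℕ) / c) ^ ((2 * (j + 2) : ℕ) : ℝ), by positivity, fun u hu ↦ ?_⟩
  have h := rpow_mul_exp_neg_mul_le (σ := (2 * (j + 2) : ℕ)) (Nat.cast_nonneg _) hc
    (Real.sqrt_nonneg u)
  rw [Real.rpow_natCast (√u), pow_mul, Real.sq_sqrt hu.le] at h
  refine le_trans (le_of_eq ?_) (mul_le_mul_of_nonneg_right h (by positivity : 0 ≤ (u ^ 2)⁻¹))
  rw [pow_add]
  field_simp

lemma summable_pow_mul_exp_neg_mul_sqrt (j : ℕ) {c : ℝ} (hc : 0 < c) :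
    Summable fun n : ℕ ↦ (n : ℝ) ^ j * Real.exp (-(c * √n)) := by
  obtain ⟨K, -, hK⟩ := exists_pow_mul_exp_neg_mul_sqrt_le j hc
  have h : Summable fun n : ℕ ↦ K * ((n : ℝ) ^ 2)⁻¹ :=
    (Real.summable_nat_pow_inv.2 one_lt_two).mul_left K
  rw [← summable_nat_add_iff 1] at h ⊢
  exact h.of_nonneg_of_le (fun n ↦ by positivity) fun n ↦ hK _ (by positivity)

section

variable {A : ℝ} (hA : 0 < A) (m : ℕ)
include hA

lemma summable_pow_mul_expCos : Summable fun n : ℕ ↦ (n : ℝ) ^ m * expCos (2 * √(A * π * n)) := by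
  refine (summable_pow_mul_exp_neg_mul_sqrt m (c := 2 * √(A * π)) (by positivity)).of_norm_bounded
    fun n ↦ ?_
  rw [norm_mul, Real.norm_of_nonneg (by positivity), Real.norm_eq_abs]
  gcongr
  refine (abs_expCos_le _).trans_eq ?_
  rw [Real.sqrt_mul (by positivity), ← mul_assoc]

lemma laplace_iteratedDeriv_levyKernel_add {ν : ℝ} (hν : 0 ≤ ν) :
    laplace (fun t ↦ iteratedDeriv (2 * m) (levyKernel A) t) (2 * π * I * ν) +
        laplace (fun t ↦ iteratedDeriv (2 * m) (levyKernel A) t) (-(2 * π * I * ν)) =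
      2 * √(π / A) * (-1) ^ m * (2 * π) ^ (2 * m) *
        (ν ^ (2 * m) * expCos (2 * √(A * π * ν)) : ℝ) := by
  set s := √(π * ν)
  have hs_sq : (s : ℂ) ^ 2 = π * ν := by
    exact_mod_cast Real.sq_sqrt (by positivity : 0 ≤ π * ν)
  have hsqrt : √(A * π * ν) = √A * s := by rw [mul_assoc, Real.sqrt_mul hA.le]
  have hroot {u : ℂ} (hu : u.re = 1) : ((s * u) ^ 2) ^ (1 / 2 : ℂ) = s * u := by
    rcases (show 0 ≤ s from Real.sqrt_nonneg _).eq_or_lt with h0 | h0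
    · simp [← h0]
    · rw [one_div, sq_cpow_two_inv (by simpa [hu] using h0)]
  have hplus : 2 * π * I * ν = (s * (1 + I)) ^ 2 := by
    rw [mul_pow, hs_sq, add_sq, I_sq]; ring
  have hminus : -(2 * π * I * ν) = (s * (1 - I)) ^ 2 := by
    rw [mul_pow, hs_sq, sub_sq, I_sq]; ring
  have hpow : (2 * π * I * ν) ^ (2 * m) = (-1) ^ m * (2 * π) ^ (2 * m) * (ν : ℂ) ^ (2 * m) := by
    rw [mul_pow, mul_pow _ I, pow_mul I, I_sq]; ring
  rw [laplace_iteratedDeriv_levyKernel hA _ (by simp),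
    laplace_iteratedDeriv_levyKernel hA _ (by simp), laplace_levyKernel hA (by simp),
    laplace_levyKernel hA (by simp), (even_two_mul m).neg_pow, hpow, hminus, hplus,
    hroot (by simp), hroot (by simp), hsqrt]
  push_cast [ofReal_expCos]
  ring_nf

lemma tsum_iteratedDeriv_levyKernel :
    ∑' k : ℕ+, iteratedDeriv (2 * m) (levyKernel A) (k : ℂ) = √(π / A) *
      ((0 : ℂ) ^ (2 * m) + 2 * (-1) ^ m * (2 * π) ^ (2 * m) *
        ∑' n : ℕ+, (n : ℂ) ^ (2 * m) * expCos (2 * √(A * π * n))) := by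
  obtain ⟨C, hC0, hC⟩ := exists_norm_iteratedDeriv_levyKernel_le (2 * m)
  have hlaplace (n : ℕ) := laplace_iteratedDeriv_levyKernel_add hA m n.cast_nonneg
  simp only [ofReal_natCast] at hlaplace
  have h := tsum_pnat_eq_laplace_zero_add_tsum (integrableOn_iteratedDeriv_levyKernel hA (2 * m))
    (fun t ht ↦ (hasDerivAt_iteratedDeriv_ofReal (differentiableOn_levyKernel A) (2 * m)
      ht).continuousAt.continuousWithinAt)
    (tendsto_iteratedDeriv_levyKernel_nhdsGT_zero hA (2 * m))
    (b := (2 * m : ℕ) + 3 / 2) (C := C) (by linarith [(2 * m).cast_nonneg (α := ℝ)])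
    (fun t ht ↦ (hC A t hA.le ht).trans <| mul_le_mul_of_nonneg_left
      (mul_le_of_le_one_right (by positivity)
        (Real.exp_le_one_iff.2 (neg_nonpos.2 (by positivity)))) hC0)
    (by
      simp only [hlaplace]
      exact (ofRealCLM.summable (summable_pow_mul_expCos hA (2 * m))).mul_left _)
  simp only [ofReal_natCast] at h
  rw [h, laplace_iteratedDeriv_levyKernel hA _ le_rfl, laplace_levyKernel hA le_rfl,
    tsum_congr fun n : ℕ+ ↦ hlaplace n, tsum_mul_left, zero_cpow (by norm_num), mul_zero, neg_zero,
    exp_zero]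
  push_cast
  ring

end

lemma hasSum_iteratedDeriv {ι : Type*} {f : ι → ℂ → ℂ} {U : Set ℂ} (hU : IsOpen U)
    (hf : ∀ i, DifferentiableOn ℂ (f i) U) {u : ι → ℝ} (hu : Summable u)
    (hb : ∀ i, ∀ z ∈ U, ‖f i z‖ ≤ u i) {z : ℂ} (hz : z ∈ U) (l : ℕ) :
    HasSum (fun i ↦ iteratedDeriv l (f i) z) (iteratedDeriv l (fun w ↦ ∑' i, f i w) z) := by
  have h : TendstoLocallyUniformlyOn
      (fun (s : Finset ι) w ↦ iteratedDeriv l (fun w ↦ ∑ i ∈ s, f i w) w)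
      (iteratedDeriv l fun w ↦ ∑' i, f i w) atTop U := by
    induction l with
    | zero =>
      simp only [iteratedDeriv_zero]
      exact (tendstoUniformlyOn_tsum hu hb).tendstoLocallyUniformlyOn
    | succ l ih =>
      simp only [iteratedDeriv_succ]
      exact ih.deriv (.of_forall fun s ↦ differentiableOn_iteratedDeriv hU
        (DifferentiableOn.fun_sum fun i _ ↦ hf i) l) hU
  exact (h.tendsto_at hz).congr fun s ↦ iteratedDeriv_fun_sum fun i _ ↦
    ((hf i).analyticAt (hU.mem_nhds hz)).contDiffAt

/-! ### Partial fractions -/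

section PartialFractions

variable {x t : ℝ} {z : ℂ}

/-- The terms `z ^ (-1/2) (x / π) / (x² + j² z²)`, `j ≥ 1`, of the partial fraction expansion of
`∑ b, levyKernel (2πbx) z`. -/
noncomputable def lorentzKernel (x : ℝ) (j : ℕ) (z : ℂ) : ℂ :=
  z ^ (-(1 / 2) : ℂ) * (x / π / (x ^ 2 + j ^ 2 * z ^ 2))

lemma ofReal_sq_add_sq_mul_sq_ne_zero (hx : 0 < x) (j : ℕ) (hz : z ∈ rightHalfPlane) :
    (x : ℂ) ^ 2 + j ^ 2 * z ^ 2 ≠ 0 := by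
  have hre : 0 < z.re := hz
  have hfactor : (x : ℂ) ^ 2 + j ^ 2 * z ^ 2 = (x + j * z * I) * (x - j * z * I) := by
    linear_combination j ^ 2 * z ^ 2 * I_sq
  rcases j.eq_zero_or_pos with rfl | hj
  · simp [hx.ne']
  rw [hfactor]
  refine mul_ne_zero ?_ ?_ <;>
  · refine fun h ↦ (mul_pos (Nat.cast_pos.2 hj) hre).ne' ?_
    simpa using congrArg im h

lemma differentiableOn_lorentzKernel (hx : 0 < x) (j : ℕ) :
    DifferentiableOn ℂ (lorentzKernel x j) rightHalfPlane :=
  (differentiableOn_cpow_const_rightHalfPlane _).mul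
    (by fun_prop (disch := exact fun _ ↦ ofReal_sq_add_sq_mul_sq_ne_zero hx j))

lemma norm_le_norm_ofReal_add {a : ℝ} (ha : 0 ≤ a) (hz : 0 ≤ z.re) : ‖z‖ ≤ ‖(a : ℂ) + z‖ := by
  rw [← sq_le_sq₀ (norm_nonneg _) (norm_nonneg _), Complex.sq_norm, Complex.sq_norm,
    normSq_apply, normSq_apply, add_re, add_im, ofReal_re, ofReal_im, zero_add]
  nlinarith

lemma re_sq_nonneg_of_mem_closedBall (ht : 0 < t) (hz : z ∈ Metric.closedBall (t : ℂ) (t / 2)) :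
    0 ≤ (z ^ 2).re := by
  have hre := half_le_re_of_mem_closedBall hz
  have him := (abs_im_le_norm (z - t)).trans (mem_closedBall_iff_norm.1 hz)
  rw [sub_im, ofReal_im, sub_zero] at him
  rw [sq, mul_re, sub_nonneg, ← sq, ← sq, sq_le_sq, abs_of_pos ((half_pos ht).trans_le hre)]
  exact him.trans hre

lemma sq_mul_sq_le_norm_of_mem_closedBall (ht : 0 < t) (j : ℕ)
    (hz : z ∈ Metric.closedBall (t : ℂ) (t / 2)) :
    (j : ℝ) ^ 2 * (t / 2) ^ 2 ≤ ‖(x : ℂ) ^ 2 + j ^ 2 * z ^ 2‖ := by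
  have hre : 0 ≤ ((j : ℂ) ^ 2 * z ^ 2).re := by
    rw [← Nat.cast_pow, ← ofReal_natCast, re_ofReal_mul]
    exact mul_nonneg (Nat.cast_nonneg _) (re_sq_nonneg_of_mem_closedBall ht hz)
  have h := norm_le_norm_ofReal_add (sq_nonneg x) hre
  rw [ofReal_pow, norm_mul, norm_pow, norm_pow, Complex.norm_natCast] at h
  refine le_trans ?_ h
  gcongr
  exact half_le_norm_of_mem_closedBall hz

lemma norm_lorentzKernel_le_of_mem_closedBall (hx : 0 < x) (ht : 0 < t) {j : ℕ} (hj : 0 < j)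
    (hz : z ∈ Metric.closedBall (t : ℂ) (t / 2)) :
    ‖lorentzKernel x j z‖ ≤ (t / 2) ^ (-(1 / 2) : ℝ) * (x / π / ((j : ℝ) ^ 2 * (t / 2) ^ 2)) := by
  have hcpow := norm_cpow_neg_le_of_mem_closedBall (r := 1 / 2) (by norm_num) ht hz
  push_cast at hcpow
  rw [lorentzKernel, norm_mul, norm_div, ← ofReal_div, norm_real,
    Real.norm_of_nonneg (by positivity)]
  gcongr
  exact sq_mul_sq_le_norm_of_mem_closedBall ht j hz

lemma exists_norm_iteratedDeriv_lorentzKernel_le (hx : 0 < x) (l : ℕ) : ∃ C : ℝ, 0 < C ∧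
    ∀ j : ℕ, 0 < j → ∀ t : ℝ, 0 < t →
      ‖iteratedDeriv l (lorentzKernel x j) t‖ ≤ C * ((j : ℝ) ^ 2)⁻¹ * t ^ (-(l + 5 / 2) : ℝ) := by
  refine ⟨l.factorial * (x / π) * (1 / 2 : ℝ) ^ (-(l + 5 / 2) : ℝ), by positivity,
    fun j hj t ht ↦ (norm_iteratedDeriv_le_of_closedBall (differentiableOn_lorentzKernel hx j) ht l
      fun z hz ↦ norm_lorentzKernel_le_of_mem_closedBall hx ht hj hz).trans_eq ?_⟩
  have hpow : t ^ (-(l + 5 / 2) : ℝ) * (1 / 2 : ℝ) ^ (-(l + 5 / 2) : ℝ) =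
      (t / 2) ^ (-(1 / 2) : ℝ) / (t / 2) ^ 2 / (t / 2) ^ l := by
    rw [← Real.mul_rpow ht.le (by norm_num), mul_one_div, ← Real.rpow_natCast,
      ← Real.rpow_natCast, ← Real.rpow_sub (by positivity), ← Real.rpow_sub (by positivity)]
    congr 1
    push_cast
    ring
  linear_combination (-(l.factorial * (x / π) * ((j : ℝ) ^ 2)⁻¹)) * hpow

lemma summable_exp_neg_two_pi_mul_pow (hz : z ∈ rightHalfPlane) :
    Summable fun b : ℕ ↦ exp (-(2 * π * z)) ^ b := by
  refine summable_geometric_of_norm_lt_one ?_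
  have hre : 0 < z.re := hz
  rw [norm_exp, Real.exp_lt_one_iff]
  simpa using by positivity

-- Both sides expand `π cot (π i z)`: as a `q`-series and as a Mittag-Leffler series.
lemma tsum_exp_neg_two_pi_mul_pow (hz : z ∈ rightHalfPlane) :
    ∑' b : ℕ+, exp (-(2 * π * z)) ^ (b : ℕ) =
      1 / (2 * π * z) - 1 / 2 + ∑' j : ℕ+, z / π / (z ^ 2 + j ^ 2) := by
  have hre : 0 < z.re := hz
  have hz0 := ne_zero_of_mem_rightHalfPlane hz
  have hpi : (π : ℂ) ≠ 0 := ofReal_ne_zero.2 Real.pi_ne_zero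
  let τ : UpperHalfPlane := ⟨I * z, by simpa using hre⟩
  have hcot : π * Complex.cot (π * (I * z)) =
      π * I - 2 * π * I * ∑' n : ℕ, exp (2 * π * I * (I * z)) ^ n := pi_mul_cot_pi_q_exp τ
  have hexp : 2 * π * I * (I * z) = -(2 * π * z) := by linear_combination 2 * π * z * I_sq
  have hterm (j : ℕ+) : 1 / (I * z - j) + 1 / (I * z + j) =
      -2 * I * π * (z / π / (z ^ 2 + j ^ 2)) := by
    have hsub : I * z - (j : ℂ) ≠ 0 := fun h ↦ hre.ne' (by simpa using congrArg im h)
    have hadd : I * z + (j : ℂ) ≠ 0 := fun h ↦ hre.ne' (by simpa using congrArg im h)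
    have hprod : z ^ 2 + (j : ℂ) ^ 2 = -((I * z - j) * (I * z + j)) := by
      linear_combination z ^ 2 * I_sq
    rw [hprod]
    field_simp
    ring
  have hone : 1 / (I * z) = -2 * I * π * (1 / (2 * π * z)) := by
    field_simp
    simp
  rw [cot_series_rep (UpperHalfPlane.coe_mem_integerComplement τ), hexp,
    ← tsum_zero_pnat_eq_tsum_nat (summable_exp_neg_two_pi_mul_pow hz), pow_zero,
    tsum_congr hterm, tsum_mul_left, hone] at hcot
  refine mul_left_cancel₀ (by simp : -2 * I * π ≠ 0) ?_
  linear_combination -hcot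

lemma tsum_levyKernel_eq (hx : 0 < x) (hz : z ∈ rightHalfPlane) :
    ∑' b : ℕ+, levyKernel (2 * π * b * x) z =
      1 / (2 * π * x) * z ^ (-(1 / 2) : ℂ) - 1 / 2 * z ^ (-(3 / 2) : ℂ) +
        ∑' j : ℕ+, lorentzKernel x j z := by
  have hz0 := ne_zero_of_mem_rightHalfPlane hz
  have hx0 : (x : ℂ) ≠ 0 := ofReal_ne_zero.2 hx.ne'
  have hratio : (x : ℂ) / z ∈ rightHalfPlane := by
    have hre : 0 < z.re := hz
    have := normSq_pos.2 hz0
    change 0 < ((x : ℂ) / z).re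
    rw [div_eq_mul_inv, re_ofReal_mul, inv_re]
    positivity
  have hlevy (b : ℕ+) : levyKernel (2 * π * b * x) z =
      z ^ (-(3 / 2) : ℂ) * exp (-(2 * π * (x / z))) ^ (b : ℕ) := by
    rw [levyKernel, ← exp_nat_mul]
    congr 2
    push_cast
    ring
  have hhalf : z ^ (-(1 / 2) : ℂ) = z ^ (-(3 / 2) : ℂ) * z := by
    nth_rewrite 3 [← cpow_one z]
    rw [← cpow_add _ _ hz0]
    norm_num
  have hlorentz (j : ℕ+) : lorentzKernel x j z =
      z ^ (-(3 / 2) : ℂ) * (x / z / π / ((x / z) ^ 2 + j ^ 2)) := by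
    have := ofReal_sq_add_sq_mul_sq_ne_zero hx j hz
    have hdiv : ((x : ℂ) / z) ^ 2 + (j : ℂ) ^ 2 = (x ^ 2 + ((j : ℕ) : ℂ) ^ 2 * z ^ 2) / z ^ 2 := by
      field_simp
    rw [lorentzKernel, hhalf, mul_assoc, hdiv]
    field_simp
  simp only [hlevy, hlorentz, tsum_mul_left, tsum_exp_neg_two_pi_mul_pow hratio, hhalf]
  field_simp

end PartialFractions

/-! ### Rising factorials and power series -/

section Poch

variable (a : ℂ) (k n : ℕ)

lemma poch_zero : poch a 0 = 1 := prod_range_zero _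

lemma poch_succ : poch a (k + 1) = poch a k * (a + k) := prod_range_succ _ _

lemma poch_one : poch 1 k = k.factorial := by
  induction k with
  | zero => simp [poch_zero]
  | succ k ih => rw [poch_succ, ih, Nat.factorial_succ]; push_cast; ring

lemma poch_add : poch a (k + n) = poch a k * poch (a + k) n := by
  rw [poch, prod_range_add]
  simp only [Nat.cast_add, ← add_assoc, poch]

lemma poch_two_mul_two_mul : poch (2 * a) (2 * k) = 4 ^ k * (poch a k * poch (a + 1 / 2) k) := by
  induction k with
  | zero => simp [poch_zero]
  | succ k ih =>
    rw [mul_add_one, poch_succ, poch_succ, ih, poch_succ, poch_succ]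
    push_cast
    ring

lemma poch_sub_natCast : poch (a - n) n = (-1) ^ n * poch (1 - a) n := by
  have hconst : (-1 : ℂ) ^ n = ∏ _i ∈ range n, (-1) := by rw [prod_const, card_range]
  rw [poch, ← prod_range_reflect, poch, hconst, ← prod_mul_distrib]
  refine prod_congr rfl fun i hi ↦ ?_
  rw [Nat.cast_sub (by grind), Nat.cast_sub (by grind)]
  push_cast
  ring

lemma poch_half_add_intCast_ne_zero (l : ℤ) : poch (1 / 2 + l) k ≠ 0 := by
  refine prod_ne_zero_iff.2 fun i _ h ↦ ?_
  have h2 : (1 + 2 * (l + i) : ℤ) = 0 := by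
    exact_mod_cast (by linear_combination 2 * h : (1 + 2 * (l + i) : ℂ) = 0)
  omega

lemma poch_half_ne_zero : poch (1 / 2) k ≠ 0 := by
  simpa using poch_half_add_intCast_ne_zero k 0

lemma poch_half_two_mul : poch (1 / 2) (2 * k) = 4 ^ k * (poch (1 / 4) k * poch (3 / 4) k) := by
  have h := poch_two_mul_two_mul (1 / 4) k
  norm_num at h ⊢
  exact h

lemma poch_half_add_two_mul (m i : ℕ) : poch (1 / 2 + 2 * i) (2 * m) = poch (1 / 2) (2 * m) *
    (poch (1 / 4 + m) i * poch (3 / 4 + m) i / (poch (1 / 4) i * poch (3 / 4) i)) := by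
  have hshift : poch (1 / 2 + 2 * m) (2 * i) =
      4 ^ i * (poch (1 / 4 + m) i * poch (3 / 4 + m) i) := by
    rw [show (1 / 2 + 2 * m : ℂ) = 2 * (1 / 4 + m) by ring, poch_two_mul_two_mul,
      show (1 / 4 + m + 1 / 2 : ℂ) = 3 / 4 + m by ring]
  have hne := poch_half_ne_zero (2 * i)
  have h := poch_add (1 / 2) (2 * i) (2 * m)
  rw [add_comm (2 * i), poch_add] at h
  push_cast at h
  rw [hshift, poch_half_two_mul i] at h
  rw [poch_half_two_mul] at hne
  rw [← mul_div_assoc, eq_div_iff (right_ne_zero_of_mul hne)]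
  refine mul_left_cancel₀ (left_ne_zero_of_mul hne) ?_
  linear_combination -h

lemma poch_half_sub_two_mul (m i : ℕ) : poch (1 / 2 - 2 * i) (2 * m) = poch (1 / 2) (2 * m) *
    (poch (1 / 4) i * poch (3 / 4) i / (poch (1 / 4 - m) i * poch (3 / 4 - m) i)) := by
  have hshift : poch (1 / 2 - 2 * m) (2 * i) =
      4 ^ i * (poch (1 / 4 - m) i * poch (3 / 4 - m) i) := by
    rw [show (1 / 2 - 2 * m : ℂ) = 2 * (1 / 4 - m) by ring, poch_two_mul_two_mul,
      show (1 / 4 - m + 1 / 2 : ℂ) = 3 / 4 - m by ring]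
  have hne := poch_half_add_intCast_ne_zero (2 * i) (-(2 * m))
  push_cast at hne
  rw [← sub_eq_add_neg, hshift] at hne
  have hreflect (b : ℂ) : poch (b - 2 * i) (2 * i) = poch (1 - b) (2 * i) := by
    simpa using poch_sub_natCast b (2 * i)
  have h := poch_add (1 / 2 - 2 * i) (2 * i) (2 * m)
  rw [add_comm (2 * i), poch_add] at h
  push_cast at h
  rw [sub_add_cancel, hreflect, show (1 / 2 - 2 * i + 2 * m : ℂ) = 1 / 2 + 2 * m - 2 * i by ring,
    hreflect, show (1 - (1 / 2 + 2 * m) : ℂ) = 1 / 2 - 2 * m by ring, hshift,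
    show (1 - 1 / 2 : ℂ) = 1 / 2 by norm_num, poch_half_two_mul i] at h
  rw [← mul_div_assoc, eq_div_iff (right_ne_zero_of_mul hne)]
  refine mul_left_cancel₀ (left_ne_zero_of_mul hne) ?_
  linear_combination h

end Poch

section PowerSeries

variable {z : ℂ}

lemma iteratedDeriv_cpow_const (s : ℂ) (l : ℕ) (hz : z ∈ rightHalfPlane) :
    iteratedDeriv l (fun z ↦ z ^ s) z = (-1) ^ l * poch (-s) l * z ^ (s - l) := by
  induction l generalizing z with
  | zero => simp [poch_zero]
  | succ l ih =>
    have hev : iteratedDeriv l (fun z ↦ z ^ s) =ᶠ[𝓝 z]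
        fun z ↦ (-1) ^ l * poch (-s) l * z ^ (s - l) := by
      filter_upwards [isOpen_rightHalfPlane.mem_nhds hz] with w hw using ih hw
    have hderiv := ((hasDerivAt_id z).cpow_const (c := s - l) (Or.inl hz)).const_mul
      ((-1) ^ l * poch (-s) l)
    simp only [id] at hderiv
    rw [iteratedDeriv_succ, hev.deriv_eq, hderiv.deriv, poch_succ, Nat.cast_succ, ← sub_sub]
    ring

lemma cpow_add_intCast_mul_natCast (hz : z ≠ 0) (s : ℂ) (n : ℤ) (i : ℕ) :
    z ^ (s + n * i) = z ^ s * (z ^ n) ^ i := by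
  rw [cpow_add _ _ hz, ← Int.cast_natCast i, ← Int.cast_mul, cpow_intCast, zpow_mul, zpow_natCast]

lemma hasSum_iteratedDeriv_cpow_div_one_sub (s c : ℂ) (n : ℤ) (hz : z ∈ rightHalfPlane)
    (hc : ‖c * z ^ n‖ < 1) (l : ℕ) :
    HasSum (fun i : ℕ ↦ c ^ i * ((-1) ^ l * poch (-(s + n * i)) l * z ^ (s + n * i - l)))
      (iteratedDeriv l (fun w ↦ w ^ s / (1 - c * w ^ n)) z) := by
  obtain ⟨r, hcr, hr1⟩ := exists_between hc
  have hzpow : ContinuousAt (fun w ↦ ‖c * w ^ n‖) z :=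
    ((continuousAt_zpow₀ z n (.inl (ne_zero_of_mem_rightHalfPlane hz))).const_mul c).norm
  have hcpow : ContinuousAt (fun w ↦ ‖w ^ s‖) z :=
    (continuousAt_id.cpow continuousAt_const (.inl hz)).norm
  obtain ⟨U, hU, hUopen, hzU⟩ := eventually_nhds_iff.1 <|
    ((hzpow.eventually_lt_const hcr).and (hcpow.eventually_lt_const (lt_add_one _))).and
      (isOpen_rightHalfPlane.eventually_mem hz)
  have hterm {w : ℂ} (hw : w ∈ U) (i : ℕ) :
      c ^ i * w ^ (s + n * i) = w ^ s * (c * w ^ n) ^ i := by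
    rw [cpow_add_intCast_mul_natCast (ne_zero_of_mem_rightHalfPlane (hU w hw).2), mul_pow]
    ring
  have hsum := hasSum_iteratedDeriv (f := fun (i : ℕ) w ↦ c ^ i * w ^ (s + n * i))
    (u := fun i ↦ (‖z ^ s‖ + 1) * r ^ i) hUopen
    (fun i ↦ ((differentiableOn_cpow_const_rightHalfPlane _).mono
      fun w hw ↦ (hU w hw).2).const_mul _)
    ((summable_geometric_of_lt_one ((norm_nonneg _).trans hcr.le) hr1).mul_left _)
    (fun i w hw ↦ by
      rw [hterm hw, norm_mul, norm_pow]
      obtain ⟨⟨hwn, hws⟩, -⟩ := hU w hw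
      gcongr) hzU l
  have heq : (fun w ↦ ∑' i : ℕ, c ^ i * w ^ (s + n * i)) =ᶠ[𝓝 z]
      fun w ↦ w ^ s / (1 - c * w ^ n) := by
    filter_upwards [hUopen.mem_nhds hzU] with w hw
    rw [tsum_congr (hterm hw), tsum_mul_left,
      tsum_geometric_of_norm_lt_one ((hU w hw).1.1.trans hr1), div_eq_mul_inv]
  rw [heq.iteratedDeriv_eq] at hsum
  exact hsum.congr_fun fun i ↦ by
    rw [iteratedDeriv_const_mul_field, iteratedDeriv_cpow_const _ _ hz]

lemma iteratedDeriv_rsqrt_div_one_sub_mul_sq (m : ℕ) {c : ℂ} (hz : z ∈ rightHalfPlane)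
    (hc : ‖c * z ^ 2‖ < 1) :
    iteratedDeriv (2 * m) (fun w ↦ w ^ (-(1 / 2) : ℂ) / (1 - c * w ^ 2)) z =
      poch (1 / 2) (2 * m) * z ^ (-(1 / 2) - 2 * m : ℂ) *
        F32 (1 / 4) (3 / 4) 1 (1 / 4 - m) (3 / 4 - m) (c * z ^ 2) := by
  have hz0 := ne_zero_of_mem_rightHalfPlane hz
  have h := (hasSum_iteratedDeriv_cpow_div_one_sub (-(1 / 2)) c 2 hz hc (2 * m)).tsum_eq
  simp only [zpow_ofNat] at h
  rw [← h, F32, ← tsum_mul_left]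
  refine tsum_congr fun i ↦ ?_
  have hpow : z ^ (-(1 / 2) + (2 : ℤ) * i - (2 * m : ℕ) : ℂ) =
      z ^ (-(1 / 2) - 2 * m : ℂ) * (z ^ 2) ^ i := by
    rw [add_sub_right_comm, cpow_add_intCast_mul_natCast hz0]
    push_cast
    rfl
  have hpoch : poch (-(-(1 / 2) + (2 : ℤ) * i)) (2 * m) = poch (1 / 2 - 2 * i) (2 * m) := by
    push_cast
    ring_nf
  rw [hpow, hpoch, poch_half_sub_two_mul, poch_one,
    mul_div_mul_right _ _ (Nat.cast_ne_zero.2 i.factorial_ne_zero), (even_two_mul m).neg_one_pow]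
  ring

lemma iteratedDeriv_rsqrt_div_one_sub_div_sq (m : ℕ) {c : ℂ} (hz : z ∈ rightHalfPlane)
    (hc : ‖c / z ^ 2‖ < 1) :
    iteratedDeriv (2 * m) (fun w ↦ w ^ (-(1 / 2) : ℂ) / (1 - c / w ^ 2)) z =
      poch (1 / 2) (2 * m) * z ^ (-(1 / 2) - 2 * m : ℂ) *
        F32 (1 / 4 + m) (3 / 4 + m) 1 (1 / 4) (3 / 4) (c / z ^ 2) := by
  have hz0 := ne_zero_of_mem_rightHalfPlane hz
  have hzpow (w : ℂ) : c * w ^ (-2 : ℤ) = c / w ^ 2 := by rw [zpow_neg, zpow_ofNat, div_eq_mul_inv]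
  have h := (hasSum_iteratedDeriv_cpow_div_one_sub (-(1 / 2)) c (-2) hz (by rwa [hzpow])
    (2 * m)).tsum_eq
  simp only [hzpow] at h
  rw [← h, F32, ← tsum_mul_left]
  refine tsum_congr fun i ↦ ?_
  have hpow : z ^ (-(1 / 2) + (-2 : ℤ) * i - (2 * m : ℕ) : ℂ) =
      z ^ (-(1 / 2) - 2 * m : ℂ) * (z ^ 2)⁻¹ ^ i := by
    rw [add_sub_right_comm, cpow_add_intCast_mul_natCast hz0, zpow_neg, zpow_ofNat]
    push_cast
    rfl
  have hpoch : poch (-(-(1 / 2) + (-2 : ℤ) * i)) (2 * m) = poch (1 / 2 + 2 * i) (2 * m) := by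
    push_cast
    ring_nf
  rw [hpow, hpoch, poch_half_add_two_mul, poch_one,
    mul_div_mul_right _ _ (Nat.cast_ne_zero.2 i.factorial_ne_zero), (even_two_mul m).neg_one_pow]
  ring

variable {x : ℝ}

lemma lorentzKernel_eq_mul_div (hx : 0 < x) (j : ℕ) (w : ℂ) :
    lorentzKernel x j w =
      1 / (π * x) * (w ^ (-(1 / 2) : ℂ) / (1 - -(j : ℂ) ^ 2 / x ^ 2 * w ^ 2)) := by
  have hx0 : (x : ℂ) ≠ 0 := ofReal_ne_zero.2 hx.ne'
  have hden : 1 - -(j : ℂ) ^ 2 / x ^ 2 * w ^ 2 = (x ^ 2 + j ^ 2 * w ^ 2) / x ^ 2 := by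
    field_simp
    ring
  rw [lorentzKernel, hden]
  field_simp

lemma lorentzKernel_eq_mul_sub (hx : 0 < x) {j : ℕ} (hj : 0 < j) {w : ℂ}
    (hw : w ∈ rightHalfPlane) :
    lorentzKernel x j w = 1 / (π * x) *
      (w ^ (-(1 / 2) : ℂ) - w ^ (-(1 / 2) : ℂ) / (1 - -(x : ℂ) ^ 2 / j ^ 2 / w ^ 2)) := by
  have hx0 : (x : ℂ) ≠ 0 := ofReal_ne_zero.2 hx.ne'
  have hj0 : (j : ℂ) ≠ 0 := Nat.cast_ne_zero.2 hj.ne'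
  have hw0 := ne_zero_of_mem_rightHalfPlane hw
  have hden0 := ofReal_sq_add_sq_mul_sq_ne_zero hx j hw
  have hden : 1 - -(x : ℂ) ^ 2 / j ^ 2 / w ^ 2 = (x ^ 2 + j ^ 2 * w ^ 2) / (j ^ 2 * w ^ 2) := by
    field_simp
    ring
  rw [lorentzKernel, hden]
  field_simp
  ring

lemma iteratedDeriv_lorentzKernel_of_lt (m : ℕ) (hx : 0 < x) {j k : ℕ} (hk : 0 < k)
    (hlt : ((j * k : ℕ) : ℝ) < x) :
    iteratedDeriv (2 * m) (lorentzKernel x j) k = 1 / (π * x) * poch (1 / 2) (2 * m) *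
      (k : ℂ) ^ (-(1 / 2) - 2 * m : ℂ) * Wm m (j * k) x := by
  have hk' : (k : ℂ) ∈ rightHalfPlane := by simpa [rightHalfPlane] using hk
  have harg : -(j : ℂ) ^ 2 / x ^ 2 * k ^ 2 = -((j * k : ℕ) : ℂ) ^ 2 / x ^ 2 := by
    push_cast
    ring
  have hnorm : ‖-(j : ℂ) ^ 2 / x ^ 2 * k ^ 2‖ < 1 := by
    rw [harg, norm_div, norm_neg, norm_pow, norm_pow, Complex.norm_natCast, norm_real,
      Real.norm_of_nonneg hx.le, div_lt_one (by positivity)]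
    gcongr
  rw [funext (lorentzKernel_eq_mul_div hx j), iteratedDeriv_const_mul_field,
    iteratedDeriv_rsqrt_div_one_sub_mul_sq m hk' hnorm, harg, Wm, if_pos hlt]
  ring

lemma iteratedDeriv_lorentzKernel_of_gt (m : ℕ) (hx : 0 < x) {j k : ℕ} (hj : 0 < j) (hk : 0 < k)
    (hgt : x < ((j * k : ℕ) : ℝ)) :
    iteratedDeriv (2 * m) (lorentzKernel x j) k = 1 / (π * x) * poch (1 / 2) (2 * m) *
      (k : ℂ) ^ (-(1 / 2) - 2 * m : ℂ) * Wm m (j * k) x := by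
  have hk' : (k : ℂ) ∈ rightHalfPlane := by simpa [rightHalfPlane] using hk
  have harg : -(x : ℂ) ^ 2 / j ^ 2 / k ^ 2 = -(x : ℂ) ^ 2 / ((j * k : ℕ) : ℂ) ^ 2 := by
    push_cast
    rw [mul_pow, div_div]
  have hnorm : ‖-(x : ℂ) ^ 2 / j ^ 2 / k ^ 2‖ < 1 := by
    rw [harg, norm_div, norm_neg, norm_pow, norm_pow, Complex.norm_natCast, norm_real,
      Real.norm_of_nonneg hx.le, div_lt_one (by positivity)]
    gcongr
  have hden : (1 : ℂ) - -(x : ℂ) ^ 2 / j ^ 2 / k ^ 2 ≠ 0 :=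
    sub_ne_zero.2 fun h ↦ hnorm.ne (by rw [← h, norm_one])
  have heq : lorentzKernel x j =ᶠ[𝓝 (k : ℂ)] fun w ↦ 1 / (π * x) *
      (w ^ (-(1 / 2) : ℂ) - w ^ (-(1 / 2) : ℂ) / (1 - -(x : ℂ) ^ 2 / j ^ 2 / w ^ 2)) := by
    filter_upwards [isOpen_rightHalfPlane.mem_nhds hk'] with w hw
      using lorentzKernel_eq_mul_sub hx hj hw
  have hcpow : AnalyticAt ℂ (fun w : ℂ ↦ w ^ (-(1 / 2) : ℂ)) k :=
    analyticAt_id.cpow analyticAt_const (.inl hk')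
  rw [heq.iteratedDeriv_eq, iteratedDeriv_const_mul_field, iteratedDeriv_fun_sub,
    iteratedDeriv_cpow_const _ _ hk', iteratedDeriv_rsqrt_div_one_sub_div_sq m hk' hnorm, harg, Wm,
    if_neg hgt.le.not_gt, (even_two_mul m).neg_one_pow]
  · push_cast
    ring_nf
  · exact hcpow.contDiffAt
  · refine (hcpow.div (analyticAt_const.sub (analyticAt_const.div (analyticAt_id.pow 2) ?_))
      ?_).contDiffAt
    · exact pow_ne_zero 2 (ne_zero_of_mem_rightHalfPlane hk')
    · exact hden

lemma iteratedDeriv_lorentzKernel (m : ℕ) (hx : 0 < x) {j k : ℕ} (hj : 0 < j) (hk : 0 < k)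
    (hne : ((j * k : ℕ) : ℝ) ≠ x) :
    iteratedDeriv (2 * m) (lorentzKernel x j) k = 1 / (π * x) * poch (1 / 2) (2 * m) *
      (k : ℂ) ^ (-(1 / 2) - 2 * m : ℂ) * Wm m (j * k) x :=
  hne.lt_or_gt.elim (iteratedDeriv_lorentzKernel_of_lt m hx hk)
    (iteratedDeriv_lorentzKernel_of_gt m hx hj hk)

end PowerSeries

lemma summable_pnat_exp_neg_mul {c : ℝ} (hc : 0 < c) :
    Summable fun b : ℕ+ ↦ Real.exp (-(c * b)) := by
  have h := (Real.summable_exp_nat_mul_iff.2 (neg_neg_of_pos hc)).comp_injective PNat.coe_injective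
  refine h.congr fun b ↦ ?_
  rw [Function.comp_apply]
  ring_nf

lemma summable_pnat_inv_sq : Summable fun b : ℕ+ ↦ ((b : ℝ) ^ 2)⁻¹ :=
  (Real.summable_nat_pow_inv.2 one_lt_two).comp_injective PNat.coe_injective

lemma summable_pnat_rpow {r : ℝ} (hr : r < -1) : Summable fun b : ℕ+ ↦ (b : ℝ) ^ r :=
  (Real.summable_nat_rpow.2 hr).comp_injective PNat.coe_injective

lemma tsum_pnat_prod_eq_tsum_sum_divisors {F : ℕ → ℕ → ℂ}
    (hF : Summable fun p : ℕ+ × ℕ+ ↦ F p.1 p.2) :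
    ∑' p : ℕ+ × ℕ+, F p.1 p.2 = ∑' n : ℕ, ∑ d ∈ (n + 1).divisors, F d ((n + 1) / d) := by
  rw [← sigmaAntidiagonalEquivProd.tsum_eq,
    ← tsum_pnat_eq_tsum_succ (f := fun n ↦ ∑ d ∈ n.divisors, F d (n / d))]
  refine (sigmaAntidiagonalEquivProd.summable_iff.2 hF).tsum_sigma.trans ?_
  refine tsum_congr fun n ↦ ?_
  rw [tsum_fintype, ← Nat.sum_divisorsAntidiagonal (f := F)]
  exact sum_coe_sort (n : ℕ).divisorsAntidiagonal fun i ↦ F i.1 i.2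

lemma sum_divisors_rpow_neg (r : ℝ) (n : ℕ) :
    ∑ d ∈ n.divisors, (d : ℝ) ^ (-r) = rsigma r n * (n : ℝ) ^ (-r) := by
  rw [rsigma, ← Nat.sum_div_divisors, sum_mul]
  refine sum_congr rfl fun d hd ↦ ?_
  have hd0 : (d : ℝ) ≠ 0 := Nat.cast_ne_zero.2 (Nat.pos_of_mem_divisors hd).ne'
  rw [Nat.cast_div (Nat.dvd_of_mem_divisors hd) hd0, Real.div_rpow n.cast_nonneg d.cast_nonneg,
    Real.rpow_neg d.cast_nonneg, div_inv_eq_mul, mul_comm]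

section KernelSums

variable {x t : ℝ}

lemma norm_levyKernel_le_of_mem_closedBall {A : ℝ} {z : ℂ} (hA : 0 ≤ A) (ht : 0 < t)
    (hz : z ∈ Metric.closedBall (t : ℂ) (t / 2)) :
    ‖levyKernel A z‖ ≤ (t / 2) ^ (-(3 / 2) : ℝ) * Real.exp (-(2 * A / 9 / t)) := by
  have h := norm_cpow_neg_le_of_mem_closedBall (r := 3 / 2) (by norm_num) ht hz
  push_cast at h
  rw [levyKernel, norm_mul]
  exact mul_le_mul h (norm_exp_neg_div_le_of_mem_closedBall hA ht hz) (norm_nonneg _)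
    (by positivity)

lemma hasSum_iteratedDeriv_levyKernel (hx : 0 < x) (ht : 0 < t) (l : ℕ) :
    HasSum (fun b : ℕ+ ↦ iteratedDeriv l (levyKernel (2 * π * b * x)) t)
      (iteratedDeriv l (fun z ↦ ∑' b : ℕ+, levyKernel (2 * π * b * x) z) t) := by
  refine hasSum_iteratedDeriv Metric.isOpen_ball
    (fun b ↦ (differentiableOn_levyKernel _).mono
      (Metric.ball_subset_closedBall.trans (closedBall_half_subset_rightHalfPlane ht)))
    ((summable_pnat_exp_neg_mul (c := 4 * π * x / 9 / t) (by positivity)).mul_left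
      ((t / 2) ^ (-(3 / 2) : ℝ))) (fun b z hz ↦ ?_) (Metric.mem_ball_self (half_pos ht)) l
  refine (norm_levyKernel_le_of_mem_closedBall (by positivity) ht
    (Metric.ball_subset_closedBall hz)).trans_eq ?_
  ring_nf

lemma summable_norm_lorentzKernel_bound (x t : ℝ) : Summable fun j : ℕ+ ↦
    (t / 2) ^ (-(1 / 2) : ℝ) * (x / π / ((j : ℝ) ^ 2 * (t / 2) ^ 2)) := by
  refine (summable_pnat_inv_sq.mul_left ((t / 2) ^ (-(1 / 2) : ℝ) * (x / π / (t / 2) ^ 2))).congr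
    fun j ↦ ?_
  field_simp

lemma hasSum_iteratedDeriv_lorentzKernel (hx : 0 < x) (ht : 0 < t) (l : ℕ) :
    HasSum (fun j : ℕ+ ↦ iteratedDeriv l (lorentzKernel x j) t)
      (iteratedDeriv l (fun z ↦ ∑' j : ℕ+, lorentzKernel x j z) t) :=
  hasSum_iteratedDeriv Metric.isOpen_ball
    (fun j : ℕ+ ↦ (differentiableOn_lorentzKernel hx j).mono
      (Metric.ball_subset_closedBall.trans (closedBall_half_subset_rightHalfPlane ht)))
    (summable_norm_lorentzKernel_bound x t)
    (fun j _ hz ↦ norm_lorentzKernel_le_of_mem_closedBall hx ht j.pos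
      (Metric.ball_subset_closedBall hz)) (Metric.mem_ball_self (half_pos ht)) l

lemma analyticAt_tsum_lorentzKernel (hx : 0 < x) (ht : 0 < t) :
    AnalyticAt ℂ (fun z ↦ ∑' j : ℕ+, lorentzKernel x j z) t :=
  (Complex.differentiableOn_tsum_of_summable_norm (summable_norm_lorentzKernel_bound x t)
    (fun j : ℕ+ ↦ (differentiableOn_lorentzKernel hx j).mono
      (Metric.ball_subset_closedBall.trans (closedBall_half_subset_rightHalfPlane ht)))
    Metric.isOpen_ball (fun j _ hz ↦ norm_lorentzKernel_le_of_mem_closedBall hx ht j.pos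
      (Metric.ball_subset_closedBall hz))).analyticAt (Metric.ball_mem_nhds _ (half_pos ht))

lemma hasSum_iteratedDeriv_levyKernel_mul (hx : 0 < x) (ht : 0 < t) (l : ℕ) :
    HasSum (fun b : ℕ+ ↦ iteratedDeriv l (levyKernel (2 * π * b * x)) t)
      (1 / (2 * π * x) * ((-1) ^ l * poch (1 / 2) l * (t : ℂ) ^ (-(1 / 2) - l : ℂ))
        - 1 / 2 * ((-1) ^ l * poch (3 / 2) l * (t : ℂ) ^ (-(3 / 2) - l : ℂ))
        + ∑' j : ℕ+, iteratedDeriv l (lorentzKernel x j) t) := by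
  have ht' := ofReal_mem_rightHalfPlane.2 ht
  have hpow (c s : ℂ) : ContDiffAt ℂ l (fun z : ℂ ↦ c * z ^ s) t :=
    (analyticAt_const.mul (analyticAt_id.cpow analyticAt_const (.inl ht'))).contDiffAt
  have heq : (fun z ↦ ∑' b : ℕ+, levyKernel (2 * π * b * x) z) =ᶠ[𝓝 (t : ℂ)] fun z ↦
      1 / (2 * π * x) * z ^ (-(1 / 2) : ℂ) - 1 / 2 * z ^ (-(3 / 2) : ℂ) +
        ∑' j : ℕ+, lorentzKernel x j z := by
    filter_upwards [isOpen_rightHalfPlane.mem_nhds ht'] with z hz using tsum_levyKernel_eq hx hz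
  convert hasSum_iteratedDeriv_levyKernel hx ht l using 1
  rw [heq.iteratedDeriv_eq, iteratedDeriv_fun_add ((hpow _ _).sub (hpow _ _))
      (analyticAt_tsum_lorentzKernel hx ht).contDiffAt,
    iteratedDeriv_fun_sub (hpow _ _) (hpow _ _), iteratedDeriv_const_mul_field,
    iteratedDeriv_const_mul_field, iteratedDeriv_cpow_const _ _ ht',
    iteratedDeriv_cpow_const _ _ ht', (hasSum_iteratedDeriv_lorentzKernel hx ht l).tsum_eq,
    neg_neg, neg_neg]

lemma summable_prod_iteratedDeriv_lorentzKernel (hx : 0 < x) (l : ℕ) :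
    Summable fun p : ℕ+ × ℕ+ ↦ iteratedDeriv l (lorentzKernel x p.2) (p.1 : ℂ) := by
  obtain ⟨C, hC, h⟩ := exists_norm_iteratedDeriv_lorentzKernel_le hx l
  have hl : (-(l + 5 / 2) : ℝ) < -1 := by linarith [l.cast_nonneg (α := ℝ)]
  refine .of_norm_bounded ((summable_pnat_rpow hl).mul_of_nonneg
    (summable_pnat_inv_sq.mul_left C) (fun _ ↦ by positivity) fun _ ↦ by positivity) fun p ↦ ?_
  have hp := h p.2 p.2.pos p.1 (by exact_mod_cast p.1.pos)
  rw [ofReal_natCast] at hp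
  exact hp.trans_eq (by ring)

/-- The series `∑ σ_{2m+1/2}(n) n^{-2m-1/2} W_m(n,x)` on the right of the transformation
formula. -/
noncomputable def wSeries (m : ℕ) (x : ℝ) : ℂ :=
  ∑' n : ℕ, ((rsigma (2 * m + 1 / 2) (n + 1) : ℝ) : ℂ) *
    ((((n : ℝ) + 1) ^ (-(2 * (m : ℝ)) - 1 / 2) : ℝ) : ℂ) * Wm m (n + 1) x

lemma rsigma_mul_rpow_eq_sum_cpow (m n : ℕ) :
    ((rsigma (2 * m + 1 / 2) (n + 1) : ℝ) : ℂ) *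
        ((((n : ℝ) + 1) ^ (-(2 * (m : ℝ)) - 1 / 2) : ℝ) : ℂ) =
      ∑ d ∈ (n + 1).divisors, (d : ℂ) ^ (-(1 / 2) - 2 * m : ℂ) := by
  rw [← ofReal_mul, show -(2 * (m : ℝ)) - 1 / 2 = -(2 * m + 1 / 2) by ring, ← Nat.cast_succ,
    ← sum_divisors_rpow_neg, ofReal_sum]
  refine sum_congr rfl fun d _ ↦ ?_
  rw [ofReal_cpow d.cast_nonneg]
  push_cast
  ring_nf

lemma tsum_tsum_iteratedDeriv_lorentzKernel (m : ℕ) (hx : 0 < x) (hxint : ∀ n : ℕ, (n : ℝ) ≠ x) :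
    ∑' k : ℕ+, ∑' j : ℕ+, iteratedDeriv (2 * m) (lorentzKernel x j) (k : ℂ) =
      1 / (π * x) * poch (1 / 2) (2 * m) * wSeries m x := by
  have hsum := summable_prod_iteratedDeriv_lorentzKernel hx (2 * m)
  rw [← hsum.tsum_prod (f := fun p : ℕ+ × ℕ+ ↦ iteratedDeriv (2 * m) (lorentzKernel x p.2) p.1),
    tsum_pnat_prod_eq_tsum_sum_divisors
      (F := fun k j ↦ iteratedDeriv (2 * m) (lorentzKernel x j) k) hsum, wSeries, ← tsum_mul_left]
  refine tsum_congr fun n ↦ ?_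
  rw [rsigma_mul_rpow_eq_sum_cpow, sum_mul, mul_sum]
  refine sum_congr rfl fun d hd ↦ ?_
  have hdvd := Nat.dvd_of_mem_divisors hd
  rw [iteratedDeriv_lorentzKernel m hx (Nat.div_pos (Nat.le_of_dvd n.succ_pos hdvd)
    (Nat.pos_of_mem_divisors hd)) (Nat.pos_of_mem_divisors hd) (hxint _), Nat.div_mul_cancel hdvd]
  ring

end KernelSums

/-! ### The regularised sum of `n^(-1/2)` -/

section SmoothTruncation

variable {M t : ℝ}

/-- The function `t^(-1/2)`, smoothly truncated at height `M`: it agrees with `t^(-1/2)` for `t`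
small compared to `M` and decays like `t^(-3/2)` beyond. -/
noncomputable def truncRsqrt (M t : ℝ) : ℝ := t ^ (-(1 / 2) : ℝ) * (1 - Real.exp (-(M / t)))

lemma exp_neg_div_le_one (hM : 0 ≤ M) (ht : 0 ≤ t) : Real.exp (-(M / t)) ≤ 1 :=
  Real.exp_le_one_iff.2 (neg_nonpos.2 (div_nonneg hM ht))

lemma truncRsqrt_nonneg (hM : 0 ≤ M) (ht : 0 ≤ t) : 0 ≤ truncRsqrt M t :=
  mul_nonneg (Real.rpow_nonneg ht _) (sub_nonneg.2 (exp_neg_div_le_one hM ht))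

lemma truncRsqrt_le_rpow_neg_half (ht : 0 ≤ t) : truncRsqrt M t ≤ t ^ (-(1 / 2) : ℝ) :=
  mul_le_of_le_one_right (Real.rpow_nonneg ht _) (sub_le_self _ (Real.exp_pos _).le)

lemma truncRsqrt_le_mul_rpow (ht : 0 < t) : truncRsqrt M t ≤ M * t ^ (-(3 / 2) : ℝ) := by
  have hexp : 1 - Real.exp (-(M / t)) ≤ M / t := by linarith [Real.one_sub_le_exp_neg (M / t)]
  calc truncRsqrt M t ≤ t ^ (-(1 / 2) : ℝ) * (M / t) := by
        unfold truncRsqrt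
        gcongr
    _ = M * t ^ (-(1 / 2) - 1 : ℝ) := by
        rw [Real.rpow_sub_one ht.ne']
        ring
    _ = M * t ^ (-(3 / 2) : ℝ) := by norm_num

lemma hasDerivAt_const_div (M : ℝ) (ht : 0 < t) :
    HasDerivAt (fun t : ℝ ↦ M / t) (-(M / t ^ 2)) t := by
  simpa only [div_eq_mul_inv, mul_neg] using (hasDerivAt_inv ht.ne').const_mul M

lemma hasDerivAt_truncRsqrt (M : ℝ) (ht : 0 < t) :
    HasDerivAt (truncRsqrt M) (-(t ^ (-(3 / 2) : ℝ) * (1 / 2 * (1 - Real.exp (-(M / t))) +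
      M / t * Real.exp (-(M / t))))) t := by
  have h := (Real.hasDerivAt_rpow_const (p := -(1 / 2)) (Or.inl ht.ne')).mul
    ((hasDerivAt_const_div M ht).fun_neg.exp.const_sub 1)
  refine HasDerivAt.congr_deriv (f := truncRsqrt M) h ?_
  have hpow : t ^ (-(1 / 2) : ℝ) = t ^ (-(3 / 2) : ℝ) * t := by
    rw [← Real.rpow_add_one ht.ne']
    norm_num
  rw [hpow, show (-(1 / 2) - 1 : ℝ) = -(3 / 2) by norm_num]
  field_simp
  ring

lemma abs_deriv_truncRsqrt_le (hM : 0 ≤ M) (ht : 0 < t) :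
    |deriv (truncRsqrt M) t| ≤ 3 / 2 * t ^ (-(3 / 2) : ℝ) := by
  have hw : M / t * Real.exp (-(M / t)) ≤ 1 :=
    (Real.mul_exp_neg_le_exp_neg_one _).trans (Real.exp_le_one_iff.2 (by norm_num))
  have hw₀ : 0 ≤ M / t * Real.exp (-(M / t)) := by positivity
  have hexp := exp_neg_div_le_one hM ht.le
  have hexp₀ := Real.exp_pos (-(M / t))
  rw [(hasDerivAt_truncRsqrt M ht).deriv, abs_neg, abs_mul, abs_of_pos (Real.rpow_pos_of_pos ht _),
    mul_comm, abs_of_nonneg (by linarith)]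
  gcongr
  linarith

lemma abs_truncRsqrt_sub_le (hM : 0 ≤ M) {s : ℝ} (hs : 0 < s) (hst : s ≤ t) :
    |truncRsqrt M t - truncRsqrt M s| ≤ 3 / 2 * s ^ (-(3 / 2) : ℝ) * (t - s) := by
  have h := (convex_Icc s t).norm_image_sub_le_of_norm_deriv_le (f := truncRsqrt M)
    (C := 3 / 2 * s ^ (-(3 / 2) : ℝ))
    (fun u hu ↦ (hasDerivAt_truncRsqrt M (hs.trans_le hu.1)).differentiableAt)
    (fun u hu ↦ (abs_deriv_truncRsqrt_le hM (hs.trans_le hu.1)).trans ?_)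
    (Set.left_mem_Icc.2 hst) (Set.right_mem_Icc.2 hst)
  · rwa [Real.norm_eq_abs, Real.norm_of_nonneg (sub_nonneg.2 hst)] at h
  · exact mul_le_mul_of_nonneg_left (Real.rpow_le_rpow_of_nonpos hs hu.1 (by norm_num))
      (by norm_num)

lemma continuousOn_truncRsqrt (M : ℝ) : ContinuousOn (truncRsqrt M) (Set.Ioi 0) :=
  fun _ ht ↦ (hasDerivAt_truncRsqrt M ht).continuousAt.continuousWithinAt

lemma integrableOn_truncRsqrt (hM : 0 ≤ M) : IntegrableOn (truncRsqrt M) (Set.Ioi 0) := by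
  have hmeas {s : Set ℝ} (hs : s ⊆ Set.Ioi 0) (hs' : MeasurableSet s) :
      AEStronglyMeasurable (truncRsqrt M) (volume.restrict s) :=
    ((continuousOn_truncRsqrt M).mono hs).aestronglyMeasurable hs'
  rw [← Set.Ioc_union_Ioi_eq_Ioi (zero_le_one' ℝ), integrableOn_union]
  constructor
  · refine Integrable.mono' ((intervalIntegral.intervalIntegrable_rpow' (r := -(1 / 2))
      (by norm_num)).1) (hmeas Set.Ioc_subset_Ioi_self measurableSet_Ioc)
      (ae_restrict_of_forall_mem measurableSet_Ioc fun t ht ↦ ?_)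
    rw [Real.norm_of_nonneg (truncRsqrt_nonneg hM ht.1.le)]
    exact truncRsqrt_le_rpow_neg_half ht.1.le
  · refine Integrable.mono' ((integrableOn_Ioi_rpow_of_lt (a := -(3 / 2)) (by norm_num)
      one_pos).const_mul M) (hmeas (Set.Ioi_subset_Ioi zero_le_one) measurableSet_Ioi)
      (ae_restrict_of_forall_mem measurableSet_Ioi fun t (ht : 1 < t) ↦ ?_)
    rw [Real.norm_of_nonneg (truncRsqrt_nonneg hM (by linarith))]
    exact truncRsqrt_le_mul_rpow (by linarith)

lemma intervalIntegrable_truncRsqrt (hM : 0 ≤ M) {a b : ℝ} (ha : 0 ≤ a) (hab : a ≤ b) :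
    IntervalIntegrable (truncRsqrt M) volume a b :=
  (intervalIntegrable_iff_integrableOn_Ioc_of_le hab).2 <|
    (integrableOn_truncRsqrt hM).mono_set fun _ ht ↦ ha.trans_lt ht.1

lemma integral_rpow_mul_exp_neg_div (hM : 0 < M) :
    ∫ t in Set.Ioi (0 : ℝ), t ^ (-(3 / 2) : ℝ) * Real.exp (-(M / t)) = √(π / M) := by
  have h := laplace_levyKernel hM (B := 0) le_rfl
  rw [zero_cpow (by norm_num), mul_zero, neg_zero, exp_zero, mul_one, laplace] at h
  rw [← ofReal_inj, ← h, ← integral_complex_ofReal]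
  refine setIntegral_congr_fun measurableSet_Ioi fun t ht ↦ ?_
  simp only [levyKernel_ofReal M (le_of_lt ht), zero_mul, neg_zero, exp_zero, mul_one]

lemma continuousWithinAt_two_mul_mul_truncRsqrt (hM : 0 ≤ M) :
    ContinuousWithinAt (fun t ↦ 2 * t * truncRsqrt M t) (Set.Ici 0) 0 := by
  have hsqrt : Tendsto (fun t ↦ 2 * √t) (𝓝[≥] 0) (𝓝 0) :=
    ((continuous_const.mul Real.continuous_sqrt).tendsto' 0 0 (by simp)).mono_left
      nhdsWithin_le_nhds
  rw [ContinuousWithinAt, mul_zero, zero_mul]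
  refine squeeze_zero' ?_ ?_ hsqrt <;> filter_upwards [self_mem_nhdsWithin] with t (ht : 0 ≤ t)
  · have := truncRsqrt_nonneg hM ht
    positivity
  · rcases ht.eq_or_lt with rfl | ht₀
    · simp
    calc 2 * t * truncRsqrt M t ≤ 2 * t * t ^ (-(1 / 2) : ℝ) := by
          gcongr
          exact truncRsqrt_le_rpow_neg_half ht
      _ = 2 * √t := by
          rw [mul_assoc, mul_comm t, ← Real.rpow_add_one ht₀.ne', Real.sqrt_eq_rpow]
          norm_num

lemma tendsto_two_mul_mul_truncRsqrt_atTop (hM : 0 ≤ M) :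
    Tendsto (fun t ↦ 2 * t * truncRsqrt M t) atTop (𝓝 0) := by
  have hlim : Tendsto (fun t : ℝ ↦ 2 * M * t ^ (-(1 / 2) : ℝ)) atTop (𝓝 0) := by
    simpa using (tendsto_rpow_neg_atTop (y := 1 / 2) (by norm_num)).const_mul (2 * M)
  refine squeeze_zero' ?_ ?_ hlim <;> filter_upwards [eventually_gt_atTop 0] with t ht
  · have := truncRsqrt_nonneg hM ht.le
    positivity
  · calc 2 * t * truncRsqrt M t ≤ 2 * t * (M * t ^ (-(3 / 2) : ℝ)) := by
          gcongr
          exact truncRsqrt_le_mul_rpow ht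
      _ = 2 * M * t ^ (-(3 / 2) + 1 : ℝ) := by
          rw [Real.rpow_add_one ht.ne']
          ring
      _ = 2 * M * t ^ (-(1 / 2) : ℝ) := by norm_num

lemma integral_truncRsqrt (hM : 0 < M) :
    ∫ t in Set.Ioi (0 : ℝ), truncRsqrt M t = 2 * √(π * M) := by
  -- `2 t g(t)` is a primitive of `g(t) - 2 M t^(-3/2) e^(-M/t)`, where `g = truncRsqrt M`.
  have hderiv (t : ℝ) (ht : 0 < t) : HasDerivAt (fun t ↦ 2 * t * truncRsqrt M t)
      (truncRsqrt M t - 2 * M * (t ^ (-(3 / 2) : ℝ) * Real.exp (-(M / t)))) t := by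
    refine (((hasDerivAt_id t).const_mul 2).mul (hasDerivAt_truncRsqrt M ht)).congr_deriv ?_
    have hpow : t ^ (-(1 / 2) : ℝ) = t ^ (-(3 / 2) : ℝ) * t := by
      rw [← Real.rpow_add_one ht.ne']
      norm_num
    simp only [truncRsqrt, hpow, id]
    field_simp
    ring
  have hInt := integrableOn_rpow_neg_mul_exp_neg_div (σ := 3 / 2) (by norm_num) hM
  have h := integral_Ioi_of_hasDerivAt_of_tendsto
    (continuousWithinAt_two_mul_mul_truncRsqrt hM.le) hderiv
    ((integrableOn_truncRsqrt hM.le).sub (hInt.const_mul (2 * M)))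
    (tendsto_two_mul_mul_truncRsqrt_atTop hM.le)
  rw [integral_sub (integrableOn_truncRsqrt hM.le) (hInt.const_mul (2 * M)), integral_const_mul,
    integral_rpow_mul_exp_neg_div hM, mul_zero, zero_mul, sub_zero, sub_eq_zero] at h
  rw [h, Real.sqrt_div Real.pi_pos.le, Real.sqrt_mul Real.pi_pos.le]
  have hsqrt : √M ≠ 0 := (Real.sqrt_pos.2 hM).ne'
  field_simp
  rw [Real.sq_sqrt hM.le]

lemma summable_truncRsqrt (hM : 0 ≤ M) : Summable fun i : ℕ ↦ truncRsqrt M (i + 1) :=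
  .of_nonneg_of_le (fun i ↦ truncRsqrt_nonneg hM (by positivity))
    (fun i ↦ truncRsqrt_le_mul_rpow (by positivity))
    ((summable_nat_add_one_rpow (by norm_num)).mul_left M)

end SmoothTruncation

section RiemannError

variable {M : ℝ}

/-- The error made on `[i, i + 1]` by the right-endpoint Riemann sum of `f` with unit steps. -/
noncomputable def riemannError (f : ℝ → ℝ) (i : ℕ) : ℝ :=
  f (i + 1) - ∫ t in (i : ℝ)..i + 1, f t

lemma sum_range_riemannError {f : ℝ → ℝ}
    (hf : ∀ i : ℕ, IntervalIntegrable f volume i (i + 1)) (N : ℕ) :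
    ∑ i ∈ range N, riemannError f i = ∑ i ∈ range N, f (i + 1) - ∫ t in (0 : ℝ)..N, f t := by
  have h := intervalIntegral.sum_integral_adjacent_intervals (f := f) (μ := volume)
    (a := fun i ↦ (i : ℝ)) (n := N) fun i _ ↦ by simpa using hf i
  push_cast at h
  simp only [riemannError, sum_sub_distrib, h]

lemma abs_riemannError_truncRsqrt_zero_le (hM : 0 ≤ M) : |riemannError (truncRsqrt M) 0| ≤ 3 := by
  have hInt := intervalIntegral.integral_mono_on zero_le_one
    (intervalIntegrable_truncRsqrt hM le_rfl zero_le_one)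
    (intervalIntegral.intervalIntegrable_rpow' (r := -(1 / 2)) (by norm_num))
    fun t ht ↦ truncRsqrt_le_rpow_neg_half ht.1
  rw [integral_rpow (Or.inl (by norm_num)), Real.one_rpow, Real.zero_rpow (by norm_num)] at hInt
  have hInt₀ := intervalIntegral.integral_nonneg (μ := volume) zero_le_one
    fun t (ht : t ∈ Set.Icc (0 : ℝ) 1) ↦ truncRsqrt_nonneg hM ht.1
  have hone := truncRsqrt_le_rpow_neg_half (M := M) zero_le_one
  rw [Real.one_rpow] at hone
  have hone₀ := truncRsqrt_nonneg hM zero_le_one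
  rw [riemannError, Nat.cast_zero, zero_add, abs_le]
  constructor <;> linarith

lemma abs_riemannError_truncRsqrt_le_of_pos (hM : 0 ≤ M) {i : ℕ} (hi : 0 < i) :
    |riemannError (truncRsqrt M) i| ≤ 3 / 2 * (i : ℝ) ^ (-(3 / 2) : ℝ) := by
  have hi₀ : (0 : ℝ) < i := Nat.cast_pos.2 hi
  have hle : (i : ℝ) ≤ i + 1 := by linarith
  have hconst : truncRsqrt M (i + 1) = ∫ _ in (i : ℝ)..i + 1, truncRsqrt M (i + 1) := by simp
  rw [riemannError, hconst, ← intervalIntegral.integral_sub intervalIntegrable_const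
    (intervalIntegrable_truncRsqrt hM hi₀.le hle)]
  have h := intervalIntegral.norm_integral_le_of_norm_le_const (a := (i : ℝ)) (b := i + 1)
    (f := fun t ↦ truncRsqrt M (i + 1) - truncRsqrt M t) (C := 3 / 2 * (i : ℝ) ^ (-(3 / 2) : ℝ))
    fun t ht ↦ ?_
  · simpa using h
  rw [Set.uIoc_of_le hle] at ht
  refine (abs_truncRsqrt_sub_le hM (hi₀.trans ht.1) ht.2).trans ?_
  have hpow : t ^ (-(3 / 2) : ℝ) ≤ (i : ℝ) ^ (-(3 / 2) : ℝ) :=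
    Real.rpow_le_rpow_of_nonpos hi₀ ht.1.le (by norm_num)
  have : (i : ℝ) + 1 - t ≤ 1 := by linarith [ht.1]
  exact (mul_le_of_le_one_right (by have := hi₀.trans ht.1; positivity) this).trans (by gcongr)

lemma abs_riemannError_truncRsqrt_le (hM : 0 ≤ M) (i : ℕ) :
    |riemannError (truncRsqrt M) i| ≤ 6 * ((i : ℝ) + 1) ^ (-(3 / 2) : ℝ) := by
  rcases i.eq_zero_or_pos with rfl | hi
  · simpa using (abs_riemannError_truncRsqrt_zero_le hM).trans (by norm_num)
  have hi₁ : (1 : ℝ) ≤ i := Nat.one_le_cast.2 hi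
  calc |riemannError (truncRsqrt M) i| ≤ 3 / 2 * (i : ℝ) ^ (-(3 / 2) : ℝ) :=
        abs_riemannError_truncRsqrt_le_of_pos hM hi
    _ ≤ 3 / 2 * (((i : ℝ) + 1) / 2) ^ (-(3 / 2) : ℝ) := by
        gcongr ?_ * ?_
        exact Real.rpow_le_rpow_of_nonpos (by positivity) (by linarith) (by norm_num)
    _ = 3 / 2 * 2 ^ (3 / 2 : ℝ) * ((i : ℝ) + 1) ^ (-(3 / 2) : ℝ) := by
        rw [Real.div_rpow (by positivity) (by norm_num), Real.rpow_neg zero_le_two, div_inv_eq_mul]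
        ring
    _ ≤ 3 / 2 * 2 ^ (2 : ℝ) * ((i : ℝ) + 1) ^ (-(3 / 2) : ℝ) := by gcongr <;> norm_num
    _ = 6 * ((i : ℝ) + 1) ^ (-(3 / 2) : ℝ) := by norm_num

lemma tendsto_exp_neg_div_atTop {t : ℝ} (ht : 0 < t) :
    Tendsto (fun M : ℝ ↦ Real.exp (-(M / t))) atTop (𝓝 0) :=
  Real.tendsto_exp_neg_atTop_nhds_zero.comp (tendsto_id.atTop_div_const ht)

lemma tendsto_truncRsqrt_atTop {t : ℝ} (ht : 0 < t) :
    Tendsto (fun M ↦ truncRsqrt M t) atTop (𝓝 (t ^ (-(1 / 2) : ℝ))) := by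
  simpa [truncRsqrt] using
    ((tendsto_exp_neg_div_atTop ht).const_sub 1).const_mul (t ^ (-(1 / 2) : ℝ))

lemma tendsto_riemannError_truncRsqrt_atTop (i : ℕ) :
    Tendsto (fun M ↦ riemannError (truncRsqrt M) i) atTop
      (𝓝 (riemannError (fun t ↦ t ^ (-(1 / 2) : ℝ)) i)) := by
  have hpos {t : ℝ} (ht : t ∈ Set.uIoc (i : ℝ) (i + 1)) : 0 < t := by
    rw [Set.uIoc_of_le (by linarith)] at ht
    exact i.cast_nonneg.trans_lt ht.1
  refine (tendsto_truncRsqrt_atTop (by positivity)).sub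
    (intervalIntegral.tendsto_integral_filter_of_dominated_convergence
      (fun t ↦ t ^ (-(1 / 2) : ℝ)) ?_ ?_
      (intervalIntegral.intervalIntegrable_rpow' (by norm_num))
      (.of_forall fun t ht ↦ tendsto_truncRsqrt_atTop (hpos ht)))
  · exact .of_forall fun M ↦ ((continuousOn_truncRsqrt M).mono fun t ht ↦ hpos ht)
      |>.aestronglyMeasurable measurableSet_uIoc
  · filter_upwards [eventually_ge_atTop 0] with M hM
    refine .of_forall fun t ht ↦ ?_
    rw [Real.norm_of_nonneg (truncRsqrt_nonneg hM (hpos ht).le)]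
    exact truncRsqrt_le_rpow_neg_half (hpos ht).le

lemma hasSum_riemannError_rpow_neg_half :
    HasSum (fun i ↦ (riemannError (fun t ↦ t ^ (-(1 / 2) : ℝ)) i : ℂ)) (riemannZeta (1 / 2)) := by
  have hbound (i : ℕ) : ‖(riemannError (fun t ↦ t ^ (-(1 / 2) : ℝ)) i : ℂ)‖ ≤
      6 * ((i : ℝ) + 1) ^ (-(3 / 2) : ℝ) := by
    rw [norm_real]
    refine le_of_tendsto (tendsto_riemannError_truncRsqrt_atTop i).norm ?_
    filter_upwards [eventually_ge_atTop 0] with M hM using abs_riemannError_truncRsqrt_le hM i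
  have hsum := Summable.of_norm_bounded
    ((summable_nat_add_one_rpow (r := -(3 / 2)) (by norm_num)).mul_left 6) hbound
  refine (hsum.hasSum_iff_tendsto_nat).2 (tendsto_sum_inv_sqrt_sub.congr fun N ↦ ?_)
  rw [← ofReal_sum, sum_range_riemannError fun i ↦
      intervalIntegral.intervalIntegrable_rpow' (by norm_num),
    integral_rpow (Or.inl (by norm_num)), Real.zero_rpow (by norm_num)]
  simp only [Real.rpow_neg (Nat.cast_add_one_pos _).le, ← Real.sqrt_eq_rpow]
  norm_num [Real.sqrt_eq_rpow]
  ring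

lemma tsum_riemannError_truncRsqrt (hM : 0 < M) :
    ∑' i, riemannError (truncRsqrt M) i = ∑' i : ℕ, truncRsqrt M (i + 1) - 2 * √(π * M) := by
  have hsum : Summable (riemannError (truncRsqrt M)) := .of_norm_bounded
    ((summable_nat_add_one_rpow (r := -(3 / 2)) (by norm_num)).mul_left 6)
    (abs_riemannError_truncRsqrt_le hM.le)
  refine tendsto_nhds_unique hsum.hasSum.tendsto_sum_nat ?_
  simp only [sum_range_riemannError fun i ↦
    intervalIntegrable_truncRsqrt hM.le i.cast_nonneg (lt_add_one (i : ℝ)).le]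
  rw [← integral_truncRsqrt hM]
  exact (summable_truncRsqrt hM.le).hasSum.tendsto_sum_nat.sub
    (intervalIntegral_tendsto_integral_Ioi 0 (integrableOn_truncRsqrt hM.le)
      tendsto_natCast_atTop_atTop)

lemma tendsto_tsum_truncRsqrt_sub :
    Tendsto (fun M ↦ ((∑' i : ℕ, truncRsqrt M (i + 1) - 2 * √(π * M) : ℝ) : ℂ)) atTop
      (𝓝 (riemannZeta (1 / 2))) := by
  rw [← hasSum_riemannError_rpow_neg_half.tsum_eq, ← ofReal_tsum]
  refine (continuous_ofReal.tendsto _).comp ((tendsto_tsum_of_dominated_convergence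
    ((summable_nat_add_one_rpow (r := -(3 / 2)) (by norm_num)).mul_left 6)
    tendsto_riemannError_truncRsqrt_atTop ?_).congr' ?_)
  · filter_upwards [eventually_ge_atTop 0] with M hM i using abs_riemannError_truncRsqrt_le hM i
  · filter_upwards [eventually_gt_atTop 0] with M hM using tsum_riemannError_truncRsqrt hM

end RiemannError

lemma hasSum_pnat_cpow_neg {s : ℂ} (hs : 1 < s.re) :
    HasSum (fun k : ℕ+ ↦ (k : ℂ) ^ (-s)) (riemannZeta s) := by
  rw [hasSum_pnat_iff_hasSum_succ (f := fun k ↦ (k : ℂ) ^ (-s))]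
  exact_mod_cast hasSum_nat_add_one_cpow_neg hs

/-! ### The double series -/

section Voronoi

variable {x : ℝ}

/-- The term `a^{2m} b^{-1/2} e^{-θ} cos θ`, `θ = 2π√(2abx)`, of the double series obtained from
the left side of the transformation formula by expanding `σ_{2m+1/2}(n) n^{-1/2}` over the
factorizations `n = ab`. -/
noncomputable def expCosTerm (m : ℕ) (x : ℝ) (a b : ℕ) : ℂ :=
  (a : ℂ) ^ (2 * m) * ((√b)⁻¹ : ℝ) * expCos (2 * π * √(2 * (a * b) * x))

/-- The series `∑ σ_{2m+1/2}(n) n^{-1/2} e^{-2π√(2nx)} cos(2π√(2nx))` on the left of the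
transformation formula. -/
noncomputable def expCosSeries (m : ℕ) (x : ℝ) : ℂ :=
  ∑' n : ℕ, ((rsigma (2 * m + 1 / 2) (n + 1) / Real.sqrt ((n : ℝ) + 1) *
    Real.exp (-(2 * π * Real.sqrt (2 * ((n : ℝ) + 1) * x))) *
    Real.cos (2 * π * Real.sqrt (2 * ((n : ℝ) + 1) * x)) : ℝ) : ℂ)

/-- The sum `∑ₖ h⁽²ᵐ⁾(k)` over `k ≥ 1`, where `h` is the Lévy kernel with parameter `2πbx`. -/
noncomputable def levySeries (m : ℕ) (x : ℝ) (b : ℕ) : ℂ :=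
  ∑' k : ℕ+, iteratedDeriv (2 * m) (levyKernel (2 * π * b * x)) (k : ℂ)

lemma norm_expCosTerm_le (hx : 0 ≤ x) (m : ℕ) {a b : ℕ} (hb : 0 < b) :
    ‖expCosTerm m x a b‖ ≤
      ((a * b : ℕ) : ℝ) ^ (2 * m) * Real.exp (-(2 * π * √(2 * x) * √(a * b : ℕ))) := by
  have hb1 : (1 : ℝ) ≤ b := by exact_mod_cast hb
  have hangle : 2 * π * √(2 * (a * b) * x) = 2 * π * √(2 * x) * √(a * b : ℕ) := by
    rw [mul_assoc (2 * π), ← Real.sqrt_mul (by positivity)]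
    push_cast
    ring_nf
  rw [expCosTerm, norm_mul, norm_mul, norm_pow, Complex.norm_natCast, norm_real, norm_real, hangle,
    Real.norm_of_nonneg (by positivity)]
  refine mul_le_mul ?_ (abs_expCos_le _) (norm_nonneg _) (by positivity)
  calc (a : ℝ) ^ (2 * m) * (√b)⁻¹ ≤ (a : ℝ) ^ (2 * m) * 1 := by
        gcongr
        exact inv_le_one_of_one_le₀ (Real.one_le_sqrt.2 hb1)
    _ ≤ ((a * b : ℕ) : ℝ) ^ (2 * m) := by
        rw [mul_one, Nat.cast_mul]
        gcongr
        exact le_mul_of_one_le_right a.cast_nonneg hb1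

lemma summable_expCosTerm (hx : 0 < x) (m : ℕ) :
    Summable fun p : ℕ+ × ℕ+ ↦ expCosTerm m x p.1 p.2 := by
  obtain ⟨K, hK, hle⟩ :=
    exists_pow_mul_exp_neg_mul_sqrt_le (2 * m) (c := 2 * π * √(2 * x)) (by positivity)
  refine .of_norm_bounded ((summable_pnat_inv_sq.mul_left K).mul_of_nonneg summable_pnat_inv_sq
    (fun _ ↦ by positivity) fun _ ↦ by positivity) fun p ↦ ?_
  refine (norm_expCosTerm_le hx.le m p.2.pos).trans ((hle _ ?_).trans_eq ?_)
  · exact_mod_cast Nat.mul_pos p.1.pos p.2.pos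
  · rw [Nat.cast_mul, mul_pow, mul_inv, mul_assoc]

lemma sum_divisors_expCosTerm (m : ℕ) (x : ℝ) (n : ℕ) :
    ∑ d ∈ n.divisors, expCosTerm m x d (n / d) =
      (rsigma (2 * m + 1 / 2) n / √n * expCos (2 * π * √(2 * n * x)) : ℝ) := by
  rw [rsigma, sum_div, sum_mul, ofReal_sum]
  refine sum_congr rfl fun d hd ↦ ?_
  have hd0 : (0 : ℝ) < d := Nat.cast_pos.2 (Nat.pos_of_mem_divisors hd)
  have hmul : (d : ℝ) * (n / d : ℕ) = n := by
    exact_mod_cast Nat.mul_div_cancel' (Nat.dvd_of_mem_divisors hd)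
  have hsqrt : (√(n / d : ℕ))⁻¹ = √d / √n := by
    rw [← hmul, Real.sqrt_mul hd0.le]
    field_simp
  have hrpow : (d : ℝ) ^ (2 * m + 1 / 2 : ℝ) = (d : ℝ) ^ (2 * m) * √d := by
    rw [Real.rpow_add hd0, ← Real.sqrt_eq_rpow, ← Real.rpow_natCast]
    norm_cast
  rw [expCosTerm, hmul, hsqrt, hrpow]
  push_cast
  ring

lemma hasSum_tsum_expCosTerm (hx : 0 < x) (m : ℕ) :
    HasSum (fun b : ℕ+ ↦ ∑' a : ℕ+, expCosTerm m x a b) (expCosSeries m x) := by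
  have hsum := summable_expCosTerm hx m
  have hprod : HasSum (fun p : ℕ+ × ℕ+ ↦ expCosTerm m x p.1 p.2) (expCosSeries m x) := by
    convert hsum.hasSum using 1
    rw [tsum_pnat_prod_eq_tsum_sum_divisors hsum]
    refine tsum_congr fun n ↦ ?_
    rw [sum_divisors_expCosTerm m x (n + 1), expCos]
    push_cast
    ring
  exact ((Equiv.prodComm ℕ+ ℕ+).hasSum_iff.2 hprod).prod_fiberwise
    fun b ↦ (hsum.prod_symm.prod_factor b).hasSum

lemma tsum_expCosTerm (hx : 0 < x) (m : ℕ) {b : ℕ} (hb : 0 < b) :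
    ∑' a : ℕ+, expCosTerm m x a b = (-1) ^ m / (2 * (2 * π) ^ (2 * m)) *
      (√(2 * x) * levySeries m x b - (0 : ℂ) ^ (2 * m) * ((√b)⁻¹ : ℝ)) := by
  have : (0 : ℝ) < b := Nat.cast_pos.2 hb
  have hscale : √(π / (2 * π * b * x)) = (√(2 * x))⁻¹ * (√b)⁻¹ := by
    rw [← mul_inv, ← Real.sqrt_mul (by positivity), ← Real.sqrt_inv]
    congr 1
    field_simp
  have hangle (a : ℕ) : 2 * √(2 * π * b * x * π * a) = 2 * π * √(2 * (a * b) * x) := by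
    rw [show 2 * π * b * x * π * a = π ^ 2 * (2 * (a * b) * x) by ring,
      Real.sqrt_mul (by positivity), Real.sqrt_sq Real.pi_nonneg, ← mul_assoc]
  have hterm (a : ℕ+) : expCosTerm m x a b = ((√b)⁻¹ : ℝ) *
      ((a : ℂ) ^ (2 * m) * expCos (2 * π * √(2 * (a * b) * x))) := by
    rw [expCosTerm]
    ring
  have hroot : ((√(2 * x) : ℝ) : ℂ) ≠ 0 := ofReal_ne_zero.2 (by positivity)
  have hsign : ((-1 : ℂ) ^ m) ^ 2 = 1 := by rw [← pow_mul, mul_comm, pow_mul, neg_one_sq, one_pow]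
  rw [levySeries, tsum_iteratedDeriv_levyKernel (by positivity), hscale, tsum_congr hterm,
    tsum_mul_left]
  simp only [hangle]
  generalize ∑' a : ℕ+, (a : ℂ) ^ (2 * m) * (expCos (2 * π * √(2 * (a * b) * x)) : ℂ) = G
  push_cast
  field_simp
  linear_combination (-2 * (2 * (π : ℂ)) ^ (2 * m) * (√b : ℂ)⁻¹ * G) * hsign

end Voronoi

section PositiveOrder

variable {x : ℝ}

/-- The value of the sum of `levySeries m x b` over `b ≥ 1`, which converges only for `m > 0`. -/
noncomputable def levySum (m : ℕ) (x : ℝ) : ℂ :=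
  1 / (2 * π * x) * (poch (1 / 2) (2 * m) * riemannZeta (2 * m + 1 / 2))
    - 1 / 2 * (poch (3 / 2) (2 * m) * riemannZeta (2 * m + 3 / 2))
    + 1 / (π * x) * poch (1 / 2) (2 * m) * wSeries m x

lemma summable_prod_iteratedDeriv_levyKernel (hx : 0 < x) {l : ℕ} (hl : 2 ≤ l) :
    Summable fun p : ℕ+ × ℕ+ ↦ iteratedDeriv l (levyKernel (2 * π * p.1 * x)) (p.2 : ℂ) := by
  obtain ⟨C, hC, hle⟩ := exists_norm_iteratedDeriv_levyKernel_le l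
  set c := 4 * π * x / 9 with hc
  have hc0 : 0 < c := by positivity
  have hl' : (2 : ℝ) ≤ l := by exact_mod_cast hl
  refine .of_norm_bounded ((summable_pnat_inv_sq.mul_left (C * (2 / c) ^ 2)).mul_of_nonneg
    (summable_pnat_rpow (r := 1 / 2 - l) (by linarith)) (fun _ ↦ by positivity)
    fun _ ↦ by positivity) fun p ↦ ?_
  have : (0 : ℝ) < p.1 := Nat.cast_pos.2 p.1.pos
  have hk : (0 : ℝ) < p.2 := Nat.cast_pos.2 p.2.pos
  have hbound := hle (2 * π * p.1 * x) p.2 (by positivity) hk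
  have hexp := rpow_mul_exp_neg_mul_le zero_le_two hc0 (u := p.1 / p.2) (by positivity)
  rw [Real.rpow_two, Real.rpow_two, ← le_div_iff₀' (by positivity)] at hexp
  rw [ofReal_natCast, show 2 * (2 * π * p.1 * x) / 9 / p.2 = c * (p.1 / p.2) by rw [hc]; ring]
    at hbound
  calc _ ≤ C * ((p.2 : ℝ) ^ (-(l + 3 / 2) : ℝ) * ((2 / c) ^ 2 / (p.1 / p.2) ^ 2)) := by
        refine hbound.trans ?_
        gcongr
    _ = _ := by
        rw [show (1 / 2 - l : ℝ) = -(l + 3 / 2) + 2 by ring, Real.rpow_add hk, Real.rpow_two]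
        field_simp

lemma tsum_levySeries (hx : 0 < x) (hxint : ∀ n : ℕ, (n : ℝ) ≠ x) {m : ℕ} (hm : 0 < m) :
    ∑' b : ℕ+, levySeries m x b = levySum m x := by
  have hm' : (1 : ℝ) ≤ m := by exact_mod_cast hm
  have hterm (k : ℕ+) : ∑' b : ℕ+, iteratedDeriv (2 * m) (levyKernel (2 * π * b * x)) (k : ℂ) =
      1 / (2 * π * x) * (poch (1 / 2) (2 * m) * (k : ℂ) ^ (-(2 * m + 1 / 2) : ℂ))
        - 1 / 2 * (poch (3 / 2) (2 * m) * (k : ℂ) ^ (-(2 * m + 3 / 2) : ℂ))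
        + ∑' j : ℕ+, iteratedDeriv (2 * m) (lorentzKernel x j) (k : ℂ) := by
    have h := (hasSum_iteratedDeriv_levyKernel_mul hx (t := k) (by simp) (2 * m)).tsum_eq
    rw [ofReal_natCast, (even_two_mul m).neg_one_pow] at h
    rw [h]
    push_cast
    ring_nf
  have hzeta₁ := hasSum_pnat_cpow_neg (s := 2 * m + 1 / 2) (by simp; linarith)
  have hzeta₃ := hasSum_pnat_cpow_neg (s := 2 * m + 3 / 2) (by simp; linarith)
  have hlorentz := (summable_prod_iteratedDeriv_lorentzKernel hx (2 * m)).prod.hasSum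
  rw [tsum_tsum_iteratedDeriv_lorentzKernel m hx hxint] at hlorentz
  simp only [levySeries]
  rw [← (summable_prod_iteratedDeriv_levyKernel hx (l := 2 * m) (by lia)).tsum_comm
    (f := fun b k : ℕ+ ↦ iteratedDeriv (2 * m) (levyKernel (2 * π * b * x)) (k : ℂ)),
    tsum_congr hterm]
  exact ((((hzeta₁.mul_left _).mul_left _).sub ((hzeta₃.mul_left _).mul_left _)).add
    hlorentz).tsum_eq

lemma expCosSeries_of_pos (hx : 0 < x) (hxint : ∀ n : ℕ, (n : ℝ) ≠ x) {m : ℕ} (hm : 0 < m) :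
    expCosSeries m x = (-1) ^ m / (2 * (2 * π) ^ (2 * m)) * (√(2 * x) * levySum m x) := by
  rw [← tsum_levySeries hx hxint hm, ← tsum_mul_left, ← tsum_mul_left,
    ← (hasSum_tsum_expCosTerm hx m).tsum_eq]
  refine tsum_congr fun b ↦ ?_
  rw [tsum_expCosTerm hx m b.pos, zero_pow (by lia), zero_mul, sub_zero]

end PositiveOrder

section ZeroOrder

variable {x : ℝ}

/-- The part of `∑ h(k)`, summed over the Lévy kernels `h` with parameters `2πbx`, `b ≥ 1`, that is
summable in `k`; the rest is `k^(-1/2) / (2πx)`. -/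
noncomputable def levyRemainder (x : ℝ) (k : ℕ) : ℂ :=
  -(1 / 2) * (k : ℂ) ^ (-(3 / 2) : ℂ) + ∑' j : ℕ+, lorentzKernel x j k

lemma hasSum_levyRemainder (hx : 0 < x) (hxint : ∀ n : ℕ, (n : ℝ) ≠ x) :
    HasSum (fun i : ℕ ↦ levyRemainder x (i + 1))
      (-(1 / 2) * riemannZeta (3 / 2) + 1 / (π * x) * wSeries 0 x) := by
  have hlorentz := (summable_prod_iteratedDeriv_lorentzKernel hx (2 * 0)).prod.hasSum
  rw [tsum_tsum_iteratedDeriv_lorentzKernel 0 hx hxint, mul_zero, poch_zero, mul_one] at hlorentz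
  simp only [iteratedDeriv_zero] at hlorentz
  exact (hasSum_pnat_iff_hasSum_succ (f := levyRemainder x)).1
    (((hasSum_pnat_cpow_neg (s := 3 / 2) (by norm_num)).mul_left (-(1 / 2))).add hlorentz)

lemma hasSum_levyKernel_mul (hx : 0 < x) {k : ℕ} (hk : 0 < k) :
    HasSum (fun i : ℕ ↦ levyKernel (2 * π * (i + 1 : ℕ) * x) k)
      (1 / (2 * π * x) * (k : ℂ) ^ (-(1 / 2) : ℂ) + levyRemainder x k) := by
  have h := hasSum_iteratedDeriv_levyKernel_mul hx (t := k) (Nat.cast_pos.2 hk) 0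
  simp only [iteratedDeriv_zero, ofReal_natCast, pow_zero, poch_zero, Nat.cast_zero, sub_zero,
    one_mul] at h
  convert (hasSum_pnat_iff_hasSum_succ (f := fun b ↦ levyKernel (2 * π * b * x) k)).1 h using 1
  rw [levyRemainder]
  ring

lemma levyKernel_add (A B : ℝ) (z : ℂ) :
    levyKernel (A + B) z = levyKernel A z * exp (-(B / z)) := by
  rw [levyKernel, levyKernel, mul_assoc, ← exp_add, ofReal_add, add_div, neg_add]

lemma sum_range_levyKernel_mul (hx : 0 < x) (N : ℕ) {k : ℕ} (hk : 0 < k) :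
    ∑ i ∈ range N, levyKernel (2 * π * (i + 1 : ℕ) * x) k =
      (1 / (2 * π * x) * (k : ℂ) ^ (-(1 / 2) : ℂ) + levyRemainder x k) *
        (1 - Real.exp (-(2 * π * N * x / k)) : ℝ) := by
  have h := hasSum_levyKernel_mul hx hk
  have htail (i : ℕ) : levyKernel (2 * π * (i + N + 1 : ℕ) * x) k =
      levyKernel (2 * π * (i + 1 : ℕ) * x) k * exp (-(2 * π * N * x / k)) := by
    rw [show 2 * π * (i + N + 1 : ℕ) * x = 2 * π * (i + 1 : ℕ) * x + 2 * π * N * x by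
      push_cast; ring, levyKernel_add]
    push_cast
    rfl
  have hsplit := h.summable.sum_add_tsum_nat_add N
  simp only [htail] at hsplit
  rw [tsum_mul_right, h.tsum_eq] at hsplit
  push_cast at hsplit ⊢
  linear_combination hsplit

lemma summable_levyKernel_succ (hx : 0 ≤ x) (b : ℕ) :
    Summable fun i : ℕ ↦ levyKernel (2 * π * b * x) (i + 1 : ℕ) := by
  refine .of_norm_bounded (summable_nat_add_one_rpow (r := -(3 / 2)) (by norm_num)) fun i ↦ ?_
  rw [← ofReal_natCast, levyKernel_ofReal _ (Nat.cast_nonneg _), norm_real,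
    Real.norm_of_nonneg (by positivity), Nat.cast_succ]
  exact mul_le_of_le_one_right (by positivity)
    (exp_neg_div_le_one (by positivity) (by positivity))

lemma norm_mul_one_sub_exp_neg_div_le {M t : ℝ} (hM : 0 ≤ M) (ht : 0 ≤ t) (z : ℂ) :
    ‖z * (1 - Real.exp (-(M / t)) : ℝ)‖ ≤ ‖z‖ := by
  rw [norm_mul, norm_real, Real.norm_of_nonneg (sub_nonneg.2 (exp_neg_div_le_one hM ht))]
  exact mul_le_of_le_one_right (norm_nonneg _) (sub_le_self _ (Real.exp_pos _).le)

lemma tendsto_tsum_mul_one_sub_exp_neg_div {f : ℕ → ℂ} (hf : Summable f) :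
    Tendsto (fun M ↦ ∑' i : ℕ, f i * (1 - Real.exp (-(M / (i + 1 : ℕ))) : ℝ)) atTop
      (𝓝 (∑' i, f i)) := by
  refine tendsto_tsum_of_dominated_convergence hf.norm (fun i ↦ ?_) ?_
  · have h := (tendsto_exp_neg_div_atTop (t := (i + 1 : ℕ)) (by positivity)).const_sub 1
    simpa using ((continuous_ofReal.tendsto _).comp h).const_mul (f i)
  · filter_upwards [eventually_ge_atTop 0] with M hM i using
      norm_mul_one_sub_exp_neg_div_le hM (Nat.cast_nonneg _) _

lemma sum_range_levySeries_zero (hx : 0 < x) (hxint : ∀ n : ℕ, (n : ℝ) ≠ x) (N : ℕ) :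
    ∑ i ∈ range N, levySeries 0 x (i + 1) =
      1 / (2 * π * x) * (∑' i : ℕ, truncRsqrt (2 * π * N * x) (i + 1) : ℝ) +
        ∑' i : ℕ, levyRemainder x (i + 1) *
          (1 - Real.exp (-(2 * π * N * x / (i + 1 : ℕ))) : ℝ) := by
  have hrow (b : ℕ) : levySeries 0 x b = ∑' i : ℕ, levyKernel (2 * π * b * x) (i + 1 : ℕ) := by
    simp only [levySeries, mul_zero, iteratedDeriv_zero]
    exact tsum_pnat_eq_tsum_succ (f := fun k : ℕ ↦ levyKernel (2 * π * b * x) k)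
  have hmain : Summable fun i : ℕ ↦ 1 / (2 * π * x) * (truncRsqrt (2 * π * N * x) (i + 1) : ℂ) :=
    (Complex.hasSum_ofReal.2
      (summable_truncRsqrt (by positivity)).hasSum).summable.mul_left _
  have hremainder : Summable fun i : ℕ ↦ levyRemainder x (i + 1) *
      (1 - Real.exp (-(2 * π * N * x / (i + 1 : ℕ))) : ℝ) :=
    .of_norm_bounded (hasSum_levyRemainder hx hxint).summable.norm fun i ↦
      norm_mul_one_sub_exp_neg_div_le (by positivity) (by positivity) _
  rw [sum_congr rfl fun i _ ↦ hrow (i + 1),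
    ← Summable.tsum_finsetSum fun i _ ↦ summable_levyKernel_succ hx.le (i + 1),
    tsum_congr fun i ↦ sum_range_levyKernel_mul hx N i.succ_pos, ofReal_tsum, ← tsum_mul_left,
    ← hmain.tsum_add hremainder]
  refine tsum_congr fun i ↦ ?_
  rw [add_mul, mul_assoc, truncRsqrt, ofReal_mul, ofReal_cpow (by positivity)]
  push_cast
  rfl

/-- `∑ₐ expCosTerm 0 x a b` is not proportional to `levySeries 0 x b`: the zero frequency in
Poisson summation contributes the extra term `-b^(-1/2) / 2`, which turns into `-ζ(1/2) / 2`. -/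
lemma expCosSeries_zero (hx : 0 < x) (hxint : ∀ n : ℕ, (n : ℝ) ≠ x) :
    expCosSeries 0 x = 1 / 2 * (√(2 * x) * levySum 0 x) - 1 / 2 * riemannZeta (1 / 2) := by
  have hseries := ((hasSum_pnat_iff_hasSum_succ (f := fun b ↦ ∑' a : ℕ+, expCosTerm 0 x a b)).1
    (hasSum_tsum_expCosTerm hx 0)).tendsto_sum_nat
  have hM : Tendsto (fun N : ℕ ↦ 2 * π * N * x) atTop atTop :=
    (tendsto_natCast_atTop_atTop.const_mul_atTop (by positivity)).atTop_mul_const hx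
  have hremainder := (tendsto_tsum_mul_one_sub_exp_neg_div
    (hasSum_levyRemainder hx hxint).summable).comp hM
  rw [(hasSum_levyRemainder hx hxint).tsum_eq] at hremainder
  have hlim := (((((tendsto_tsum_truncRsqrt_sub.comp hM).const_mul (1 / (2 * π * x) : ℂ)).add
    hremainder).const_mul (√(2 * x) : ℂ)).sub tendsto_sum_inv_sqrt_sub).const_mul (1 / 2 : ℂ)
  rw [tendsto_nhds_unique hseries (hlim.congr fun N ↦ ?_)]
  · simp only [levySum, mul_zero, poch_zero, Nat.cast_zero, zero_add]
    ring
  have hcancel : √(2 * x) * (1 / (2 * π * x) * (2 * √(π * (2 * π * N * x)))) = 2 * √N := by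
    rw [show π * (2 * π * N * x) = π ^ 2 * (2 * x * N) by ring, Real.sqrt_mul (sq_nonneg π),
      Real.sqrt_sq Real.pi_nonneg, Real.sqrt_mul (by positivity : 0 ≤ 2 * x) (N : ℝ)]
    field_simp
    rw [Real.sq_sqrt (by positivity)]
  have hcancel' := congrArg ((↑) : ℝ → ℂ) hcancel
  rw [sum_congr rfl fun i _ ↦ tsum_expCosTerm hx 0 i.succ_pos, ← mul_sum, sum_sub_distrib,
    ← mul_sum, sum_range_levySeries_zero hx hxint]
  simp only [Function.comp_apply, mul_zero, pow_zero, one_mul]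
  push_cast at hcancel' ⊢
  linear_combination (-(1 / 2) : ℂ) * hcancel'

end ZeroOrder

/-! ### The functional equation -/

lemma poch_mul_Gamma {s : ℂ} (hs : ∀ n : ℕ, s ≠ -n) (k : ℕ) :
    poch s k * Gamma s = Gamma (s + k) := by
  induction k with
  | zero => simp [poch_zero]
  | succ k ih =>
    rw [poch_succ, mul_right_comm, ih, mul_comm, Nat.cast_succ, ← add_assoc,
      Gamma_add_one _ fun h ↦ hs k (eq_neg_of_add_eq_zero_left h)]

lemma ne_neg_natCast_of_re_pos {s : ℂ} (hs : 0 < s.re) (n : ℕ) : s ≠ -n := by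
  rintro rfl
  rw [neg_re, natCast_re, Left.neg_pos_iff] at hs
  exact n.cast_nonneg.not_gt hs

lemma poch_half_eq_Gamma_div (k : ℕ) :
    poch (1 / 2) k = ((Real.Gamma (k + 1 / 2) / √π : ℝ) : ℂ) := by
  have h := poch_mul_Gamma (ne_neg_natCast_of_re_pos (s := 1 / 2) (by norm_num)) k
  rw [show (1 / 2 : ℂ) = ((1 / 2 : ℝ) : ℂ) by push_cast; rfl, ← ofReal_natCast, ← ofReal_add,
    Gamma_ofReal, Gamma_ofReal, Real.Gamma_one_half_eq, add_comm] at h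
  rw [ofReal_div, eq_div_iff (ofReal_ne_zero.2 (by positivity)), ← h]
  push_cast
  rfl

lemma two_pi_ne_zero : (2 * π : ℂ) ≠ 0 :=
  mul_ne_zero two_ne_zero (ofReal_ne_zero.2 Real.pi_ne_zero)

lemma riemannZeta_one_sub_add_two_mul (m : ℕ) {s : ℂ} (hs : ∀ n : ℕ, s ≠ -n)
    (hs1 : s + 2 * m ≠ 1) :
    riemannZeta (1 - (s + 2 * m)) = (-1) ^ m / (2 * π) ^ (2 * m) * poch s (2 * m) *
      (2 * (2 * π) ^ (-s) * Gamma s * cos (π * s / 2)) * riemannZeta (s + 2 * m) := by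
  have hs' (n : ℕ) : s + 2 * m ≠ -n := fun h ↦
    hs (n + 2 * m) (by push_cast; linear_combination h)
  have hpow : (2 * π : ℂ) ^ (-(s + 2 * m)) = (2 * π : ℂ) ^ (-s) / (2 * π) ^ (2 * m) := by
    rw [neg_add, ← sub_eq_add_neg, cpow_sub _ _ two_pi_ne_zero, ← cpow_natCast]
    push_cast
    rfl
  have hcos : cos (π * (s + 2 * m) / 2) = (-1) ^ m * cos (π * s / 2) := by
    rw [show π * (s + 2 * m) / 2 = π * s / 2 + m * π by ring,
      cos_antiperiodic.add_nat_mul_eq]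
  have hGamma := poch_mul_Gamma hs (2 * m)
  push_cast at hGamma
  rw [riemannZeta_one_sub hs' hs1, hpow, hcos, ← hGamma]
  ring

lemma ofReal_cpow_half {t : ℝ} (ht : 0 ≤ t) : (t : ℂ) ^ (1 / 2 : ℂ) = √t := by
  rw [Real.sqrt_eq_rpow, ofReal_cpow ht]
  push_cast
  rfl

lemma two_pi_cpow_half : (2 * π : ℂ) ^ (1 / 2 : ℂ) = √2 * √π := by
  rw [← ofReal_mul, ← Real.sqrt_mul zero_le_two, ← ofReal_cpow_half (by positivity)]
  push_cast
  rfl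

lemma ofReal_sqrt_sq {t : ℝ} (ht : 0 ≤ t) : ((√t : ℝ) : ℂ) ^ 2 = t := by
  rw [← ofReal_pow, Real.sq_sqrt ht]

lemma cos_pi_div_four : cos (π / 4) = √2 / 2 := by
  exact_mod_cast congrArg ((↑) : ℝ → ℂ) Real.cos_pi_div_four

lemma riemannZeta_half_sub_two_mul (m : ℕ) : riemannZeta (1 / 2 - 2 * m) =
    (-1) ^ m / (2 * π) ^ (2 * m) * (poch (1 / 2) (2 * m) * riemannZeta (2 * m + 1 / 2)) := by
  have hne : (1 / 2 + 2 * m : ℂ) ≠ 1 := fun h ↦ by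
    have h4 : 4 * m = 1 := by exact_mod_cast (by linear_combination 2 * h : (4 * m : ℂ) = 1)
    omega
  have hfactor : 2 * (2 * π : ℂ) ^ (-(1 / 2) : ℂ) * Gamma (1 / 2) * cos (π * (1 / 2) / 2) = 1 := by
    have hpi : (√π : ℂ) ≠ 0 := ofReal_ne_zero.2 (by positivity)
    have htwo : (√2 : ℂ) ≠ 0 := ofReal_ne_zero.2 (by positivity)
    rw [cpow_neg, two_pi_cpow_half, Gamma_one_half_eq, ofReal_cpow_half Real.pi_nonneg,
      show (π * (1 / 2) / 2 : ℂ) = π / 4 by ring, cos_pi_div_four]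
    field_simp
  have h := riemannZeta_one_sub_add_two_mul m
    (ne_neg_natCast_of_re_pos (s := 1 / 2) (by norm_num)) hne
  rw [hfactor] at h
  convert h using 1 <;> ring_nf

lemma riemannZeta_neg_half_sub_two_mul (m : ℕ) : riemannZeta (-1 / 2 - 2 * m) =
    -(1 / (4 * π)) * ((-1) ^ m / (2 * π) ^ (2 * m) *
      (poch (3 / 2) (2 * m) * riemannZeta (2 * m + 3 / 2))) := by
  have hne : (3 / 2 + 2 * m : ℂ) ≠ 1 := fun h ↦ by
    have h4 : 4 * m + 1 = 0 := by exact_mod_cast (by linear_combination 2 * h : (4 * m + 1 : ℂ) = 0)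
    omega
  have hfactor : 2 * (2 * π : ℂ) ^ (-(3 / 2) : ℂ) * Gamma (3 / 2) * cos (π * (3 / 2) / 2) =
      -(1 / (4 * π)) := by
    have hpi : (√π : ℂ) ≠ 0 := ofReal_ne_zero.2 (by positivity)
    have htwo : (√2 : ℂ) ≠ 0 := ofReal_ne_zero.2 (by positivity)
    rw [show (-(3 / 2) : ℂ) = -(1 / 2) - 1 by ring, cpow_sub _ _ two_pi_ne_zero, cpow_one,
      cpow_neg, two_pi_cpow_half, show (3 / 2 : ℂ) = 1 / 2 + 1 by ring,
      Gamma_add_one _ (by norm_num), Gamma_one_half_eq, ofReal_cpow_half Real.pi_nonneg,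
      show (π * (1 / 2 + 1) / 2 : ℂ) = π - π / 4 by ring, cos_pi_sub, cos_pi_div_four]
    field_simp
    norm_num
  have h := riemannZeta_one_sub_add_two_mul m
    (ne_neg_natCast_of_re_pos (s := 3 / 2) (by norm_num)) hne
  rw [hfactor] at h
  convert h using 1 <;> ring_nf

lemma expCosSeries_eq_levySum (m : ℕ) {x : ℝ} (hx : 0 < x) (hxint : ∀ n : ℕ, (n : ℝ) ≠ x) :
    expCosSeries m x = (-1) ^ m / (2 * (2 * π) ^ (2 * m)) * (√(2 * x) * levySum m x) +
      riemannZeta (1 / 2) * riemannZeta (-2 * m) := by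
  cases m with
  | zero =>
    rw [expCosSeries_zero hx hxint, Nat.cast_zero, mul_zero (-2 : ℂ), riemannZeta_zero]
    ring
  | succ m =>
    rw [expCosSeries_of_pos hx hxint m.succ_pos, Nat.cast_succ,
      riemannZeta_neg_two_mul_nat_add_one, mul_zero, add_zero]

lemma two_pi_rpow_two_mul_add_half (m : ℕ) :
    (2 * π) ^ (2 * (m : ℝ) + 1 / 2) = (2 * π) ^ (2 * m) * (√2 * √π) := by
  rw [Real.rpow_add (by positivity), ← Real.sqrt_eq_rpow, Real.sqrt_mul zero_le_two,
    ← Real.rpow_natCast]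
  push_cast
  rfl

lemma expCosSeries_eq (m : ℕ) {x : ℝ} (hx : 0 < x) (hxint : ∀ n : ℕ, (n : ℝ) ≠ x) :
    expCosSeries m x = riemannZeta (1 / 2 - 2 * m) / (2 * π * √(2 * x)) +
      π * √(2 * x) * riemannZeta (-1 / 2 - 2 * m) + riemannZeta (1 / 2) * riemannZeta (-2 * m) +
      (-1) ^ m / ((π * √x * (2 * π) ^ (2 * (m : ℝ) + 1 / 2) : ℝ) : ℂ) *
        (Real.Gamma (2 * m + 1 / 2) : ℝ) * wSeries m x := by
  have hpi : (√π : ℂ) ≠ 0 := ofReal_ne_zero.2 (by positivity)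
  have htwo : (√2 : ℂ) ≠ 0 := ofReal_ne_zero.2 (by positivity)
  have hx0 : (√x : ℂ) ≠ 0 := ofReal_ne_zero.2 (by positivity)
  have hxsq : (√x : ℂ) ^ 2 = x := ofReal_sqrt_sq hx.le
  have htwosq : (√2 : ℂ) ^ 2 = 2 := by exact_mod_cast ofReal_sqrt_sq zero_le_two
  have hGamma : (Real.Gamma (2 * m + 1 / 2) : ℂ) = poch (1 / 2) (2 * m) * √π := by
    rw [poch_half_eq_Gamma_div, ofReal_div, div_mul_cancel₀ _ hpi]
    push_cast
    rfl
  rw [expCosSeries_eq_levySum m hx hxint, levySum, riemannZeta_half_sub_two_mul,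
    riemannZeta_neg_half_sub_two_mul, hGamma, two_pi_rpow_two_mul_add_half,
    Real.sqrt_mul zero_le_two]
  push_cast
  rw [← hxsq]
  generalize poch (1 / 2) (2 * m) = p, poch (3 / 2) (2 * m) = q,
    riemannZeta (2 * m + 1 / 2) = u, riemannZeta (2 * m + 3 / 2) = v
  field_simp
  linear_combination (-1) ^ m * (4 * p * u + 8 * p * wSeries m x) * htwosq

end Coalescence

theorem coalescence_cos (m : ℕ) (x : ℝ) (hx : 0 < x) (hxint : ∀ k : ℤ, x ≠ (k : ℝ)) :
    (∑' n : ℕ, ((rsigma (2 * m + 1 / 2) (n + 1) / Real.sqrt ((n : ℝ) + 1) *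
        Real.exp (-(2 * π * Real.sqrt (2 * ((n : ℝ) + 1) * x))) *
        Real.cos (2 * π * Real.sqrt (2 * ((n : ℝ) + 1) * x)) : ℝ) : ℂ))
    = riemannZeta (1 / 2 - 2 * m) / (2 * (π : ℂ) * (Real.sqrt (2 * x) : ℂ))
      + ((π * Real.sqrt (2 * x) : ℝ) : ℂ) * riemannZeta (-1 / 2 - 2 * m)
      + riemannZeta (1 / 2) * riemannZeta (-2 * m)
      + (-1 : ℂ) ^ m /
          ((π * Real.sqrt x * (2 * π) ^ (2 * (m : ℝ) + 1 / 2) : ℝ) : ℂ) *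
          ((Real.Gamma (2 * m + 1 / 2) : ℝ) : ℂ) *
        ∑' n : ℕ,
          ((rsigma (2 * m + 1 / 2) (n + 1) : ℝ) : ℂ) *
            ((((n : ℝ) + 1) ^ (-(2 * (m : ℝ)) - 1 / 2) : ℝ) : ℂ) * Wm m (n + 1) x := by
  have h := Coalescence.expCosSeries_eq m hx fun n hn ↦ hxint n (by rw [← hn, Int.cast_natCast])
  rw [Coalescence.expCosSeries, Coalescence.wSeries] at h
  rw [h]
  push_cast
  ring
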